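/- arXiv:1011.2719 — 6 statements merged into one kernel-verified Lean document; each statement's English description precedes it below -/
import Mathlib

section
/- Let G be a port-labeled graph with n nodes and let u, v be nodes of G. If the truncated views of u and v at depth n−1 are equal, i.e. V^{n−1}(u) = V^{n−1}(v), then the views of u and v are equal, i.e. V^t(u) = V^t(v) for every t ≥ 0. -/
/-- A port-labeled graph: a finite connected simple undirected graph in which each
node `v` of degree `deg v` has its incident edges assigned distinct port numbers
`1,…,deg v`.  It is encoded by a fixed-point-free involution on darts: the dart
`(v, i)` (for `i < deg v`, representing port `i+1` at `v`) is matched with the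
dart `(u, j)` when the edge with port `i+1` at `v` leads to `u` entering via port `j+1`. -/
structure PortGraph where
  /-- number of nodes; the nodes are `Fin n` -/
  n : ℕ
  npos : 0 < n
  /-- degree of each node -/
  deg : Fin n → ℕ
  /-- the dart-matching function (only its values on `i < deg v` are relevant) -/
  mtch : Fin n → ℕ → Fin n × ℕ
  mtch_lt : ∀ (v : Fin n) (i : ℕ), i < deg v → (mtch v i).2 < deg (mtch v i).1
  mtch_invol : ∀ (v : Fin n) (i : ℕ), i < deg v →
      mtch (mtch v i).1 (mtch v i).2 = (v, i)
  /-- no self-loops -/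
  no_loops : ∀ (v : Fin n) (i : ℕ), i < deg v → (mtch v i).1 ≠ v
  /-- no multiple edges -/
  no_multi : ∀ (v : Fin n) (i j : ℕ), i < deg v → j < deg v →
      (mtch v i).1 = (mtch v j).1 → i = j
  /-- connectivity -/
  connected : ∀ u v : Fin n,
    Relation.ReflTransGen (fun a b => ∃ i < deg a, (mtch a i).1 = b) u v

/-- Adjacency in a port-labeled graph. -/
def PortGraph.Adj (G : PortGraph) (u v : Fin G.n) : Prop :=
  ∃ i < G.deg u, (G.mtch u i).1 = v

/-- Rooted trees with edges labeled by pairs of port numbers, used as (truncated) views. -/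
inductive ViewTree : Type
  | node : List (ℕ × ℕ × ViewTree) → ViewTree

/-- The truncated view `V^t(v)` at depth `t` from node `v`. -/
def PortGraph.view (G : PortGraph) : ℕ → Fin G.n → ViewTree
  | 0, _ => ViewTree.node []
  | t + 1, v => ViewTree.node <| (List.range (G.deg v)).map fun i =>
      (i + 1, (G.mtch v i).2 + 1, G.view t (G.mtch v i).1)

/-- The equal-views equivalence relation (`u ∼ v` iff `V(u) = V(v)`). -/
def PortGraph.viewSetoid (G : PortGraph) : Setoid (Fin G.n) where
  r u v := ∀ t, G.view t u = G.view t v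
  iseqv := ⟨fun _ _ => rfl, fun h t => (h t).symm, fun h h' t => (h t).trans (h' t)⟩

/-- `n̂`: the number of equivalence classes of the equal-views relation
(the number of nodes of the quotient graph). -/
noncomputable def PortGraph.nhat (G : PortGraph) : ℕ := Nat.card (Quotient G.viewSetoid)

/-- `G.reachIn k u v` means there is a walk of length at most `k` from `u` to `v`,
i.e. the graph distance from `u` to `v` is at most `k`. -/
def PortGraph.reachIn (G : PortGraph) : ℕ → Fin G.n → Fin G.n → Prop
  | 0, u, v => u = v
  | k + 1, u, v => G.reachIn k u v ∨ ∃ w, G.reachIn k u w ∧ G.Adj w v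

/-- A port-preserving isomorphism between port-labeled graphs. -/
def IsPortIso (G H : PortGraph) (e : Fin G.n ≃ Fin H.n) : Prop :=
  (∀ v, H.deg (e v) = G.deg v) ∧
  ∀ (v : Fin G.n) (i : ℕ), i < G.deg v →
    H.mtch (e v) i = (e (G.mtch v i).1, (G.mtch v i).2)

/-!
Equality of depth-`t` views is the `t`-th iterate, starting from the trivial relation, of a monotone
refinement operator on equivalence relations of the node set. Such a sequence of iterates strictly
increases its number of classes at every step until it reaches a fixed point of the operator. It
has one class at depth `0` and never more than the `n̂ ≤ n` classes of the equal-views relation, so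
a fixed point is reached by depth `n̂ - 1`.
-/

open Function

section SetoidIterate

variable {α : Type*}

theorem map_of_le_surjective {r s : Setoid α} (h : r ≤ s) : Surjective (Setoid.map_of_le h) :=
  Quotient.map_surjective h surjective_id

theorem finite_quotient_of_le {r s : Setoid α} [Finite (Quotient r)] (h : r ≤ s) :
    Finite (Quotient s) :=
  .of_surjective _ (map_of_le_surjective h)

theorem card_quotient_le_of_le {r s : Setoid α} [Finite (Quotient r)] (h : r ≤ s) :
    Nat.card (Quotient s) ≤ Nat.card (Quotient r) :=
  Nat.card_le_card_of_surjective _ (map_of_le_surjective h)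

theorem card_quotient_lt_of_lt {r s : Setoid α} [Finite (Quotient r)] (h : r < s) :
    Nat.card (Quotient s) < Nat.card (Quotient r) := by
  by_contra! hcard
  have hinj : Injective (Setoid.map_of_le h.le) :=
    ((map_of_le_surjective h.le).bijective_of_nat_card_le hcard).injective
  refine h.not_ge fun a b hab => Quotient.exact (hinj ?_)
  exact Quotient.sound hab

variable {F : Setoid α → Setoid α}

theorem lt_card_quotient_iterate_top [Nonempty α] (hF : Monotone F) {t : ℕ}
    (hfin : Finite (Quotient (F^[t] ⊤))) (hfix : ∀ j < t, ¬IsFixedPt F (F^[j] ⊤)) :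
    t < Nat.card (Quotient (F^[t] ⊤)) := by
  induction t with
  | zero =>
    have : Nonempty (Quotient (F^[0] ⊤)) := (nonempty_quotient_iff _).2 ‹Nonempty α›
    exact Nat.card_pos
  | succ t ih =>
    have hle : F^[t + 1] ⊤ ≤ F^[t] ⊤ := hF.antitone_iterate_of_map_le le_top t.le_succ
    have hlt : F^[t + 1] ⊤ < F^[t] ⊤ := hle.lt_of_ne fun heq =>
      hfix t t.lt_succ_self ((iterate_succ_apply' F t ⊤).symm.trans heq)
    have hcard : t < Nat.card (Quotient (F^[t] ⊤)) :=
      ih (finite_quotient_of_le hle) fun j hj => hfix j (hj.trans t.lt_succ_self)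
    exact (Nat.succ_le_of_lt hcard).trans_lt (card_quotient_lt_of_lt hlt)

theorem exists_lt_card_quotient_isFixedPt [Nonempty α] (hF : Monotone F)
    {r : Setoid α} [Finite (Quotient r)] (hr : ∀ t, r ≤ F^[t] ⊤) :
    ∃ j < Nat.card (Quotient r), IsFixedPt F (F^[j] ⊤) := by
  by_contra! hfix
  exact (lt_card_quotient_iterate_top hF (finite_quotient_of_le (hr _)) hfix).not_ge
    (card_quotient_le_of_le (hr _))

theorem iterate_top_card_quotient_sub_one_le (hF : Monotone F)
    {r : Setoid α} [Finite (Quotient r)] (hr : ∀ t, r ≤ F^[t] ⊤) (t : ℕ) :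
    F^[Nat.card (Quotient r) - 1] ⊤ ≤ F^[t] ⊤ := by
  cases isEmpty_or_nonempty α
  · exact fun a => isEmptyElim a
  obtain ⟨j, hj, hfix⟩ := exists_lt_card_quotient_isFixedPt hF hr
  calc F^[Nat.card (Quotient r) - 1] ⊤
      ≤ F^[j] ⊤ := hF.antitone_iterate_of_map_le le_top (Nat.le_sub_one_of_lt hj)
    _ = F^[t] (F^[j] ⊤) := (hfix.iterate t).symm
    _ ≤ F^[t] ⊤ := hF.iterate t le_top

end SetoidIterate

namespace PortGraph

variable (G : PortGraph)

/-- One round of partition refinement: two nodes are related by `G.refine r` when they have the same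
degree and, for each port, the edges leaving through it arrive at equal ports of `r`-related nodes.
The classes of `G.refine^[t] ⊤` are those of equality of depth-`t` views. -/
def refine (r : Setoid (Fin G.n)) : Setoid (Fin G.n) where
  r u v := G.deg u = G.deg v ∧
    ∀ i < G.deg u, (G.mtch u i).2 = (G.mtch v i).2 ∧ r (G.mtch u i).1 (G.mtch v i).1
  iseqv :=
    { refl := fun _ => ⟨rfl, fun _ _ => ⟨rfl, r.refl _⟩⟩
      symm := fun ⟨hdeg, h⟩ => ⟨hdeg.symm, fun i hi => (h i (hdeg ▸ hi)).imp Eq.symm r.symm⟩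
      trans := fun ⟨hdeg, h⟩ ⟨hdeg', h'⟩ => ⟨hdeg.trans hdeg', fun i hi =>
        ⟨(h i hi).1.trans (h' i (hdeg ▸ hi)).1, r.trans (h i hi).2 (h' i (hdeg ▸ hi)).2⟩⟩ }

theorem refine_monotone : Monotone G.refine :=
  fun _ _ hrs _ _ ⟨hdeg, h⟩ => ⟨hdeg, fun i hi => (h i hi).imp_right (@hrs _ _)⟩

theorem ker_view_succ (t : ℕ) :
    Setoid.ker (G.view (t + 1)) = G.refine (Setoid.ker (G.view t)) := by
  ext u v
  change G.view (t + 1) u = G.view (t + 1) v ↔ G.deg u = G.deg v ∧ ∀ i < G.deg u,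
    (G.mtch u i).2 = (G.mtch v i).2 ∧ G.view t (G.mtch u i).1 = G.view t (G.mtch v i).1
  simp only [view, ViewTree.node.injEq]
  constructor
  · intro h
    have hdeg : G.deg u = G.deg v := by simpa using congrArg List.length h
    rw [← hdeg, List.map_inj_left] at h
    exact ⟨hdeg, fun i hi => by simpa using h i (List.mem_range.2 hi)⟩
  · rintro ⟨hdeg, h⟩
    rw [← hdeg, List.map_inj_left]
    exact fun i hi => by simpa using h i (List.mem_range.1 hi)

theorem ker_view_eq_iterate_refine (t : ℕ) : Setoid.ker (G.view t) = G.refine^[t] ⊤ := by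
  induction t with
  | zero => exact Setoid.eq_top_iff.2 fun _ _ => rfl
  | succ t ih => rw [ker_view_succ, ih, iterate_succ_apply']

theorem antitone_ker_view : Antitone fun t => Setoid.ker (G.view t) := by
  simpa only [ker_view_eq_iterate_refine] using
    G.refine_monotone.antitone_iterate_of_map_le le_top

theorem viewSetoid_le_ker_view (t : ℕ) : G.viewSetoid ≤ Setoid.ker (G.view t) :=
  fun _ _ h => h t

theorem nhat_le_n : G.nhat ≤ G.n :=
  (Nat.card_le_card_of_surjective _ Quotient.mk_surjective).trans_eq (Nat.card_fin G.n)

end PortGraph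

theorem truncated_view_eq_of_depth_card_general (G : PortGraph) (u v : Fin G.n)
    (h : G.view (G.nhat - 1) u = G.view (G.nhat - 1) v) :
    ∀ t : ℕ, G.view t u = G.view t v := by
  intro t
  have hle : Setoid.ker (G.view (G.nhat - 1)) ≤ Setoid.ker (G.view t) := by
    simp only [G.ker_view_eq_iterate_refine]
    exact iterate_top_card_quotient_sub_one_le G.refine_monotone
      (fun s => G.ker_view_eq_iterate_refine s ▸ G.viewSetoid_le_ker_view s) t
  exact hle h

/-- If the truncated views at depth `n-1` of two nodes of an `n`-node
port-labeled graph coincide, then their views coincide (truncated views agree at every depth). -/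
theorem truncated_view_eq_of_depth_card (G : PortGraph) (u v : Fin G.n)
    (h : G.view (G.n - 1) u = G.view (G.n - 1) v) :
    ∀ t : ℕ, G.view t u = G.view t v :=
  truncated_view_eq_of_depth_card_general G u v
    (G.antitone_ker_view (Nat.sub_le_sub_right G.nhat_le_n 1) h)
end

section
/- Let G be a port-labeled graph and let n̂ be the number of equivalence classes of the relation 'having equal views' on the nodes of G. Then for every pair of nodes v and u of G there exists a node u' with V(u') = V(u) whose graph distance from v is at most n̂ − 1. (Consequently, the truncated view of G from any node at depth 2(n̂−1) suffices to reconstruct the quotient of G by the equal-views relation.) -/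
/-!
The quotient of `G` by equality of views is connected because `G` is, so any two classes are joined
by a path in it, of length at most `n̂ - 1`. Nodes with equal views have neighbours with equal views
behind equal ports, so the path that joins the class of `v` to the class of `u` lifts, edge by edge,
to a walk of the same length that starts at `v`; it ends at a node with the view of `u`.
-/

section Fibration

variable {V W : Type*} {G : SimpleGraph V} {H : SimpleGraph W} {f : V → W}

theorem exists_walk_length_eq_of_fibration (hf : Relation.Fibration G.Adj H.Adj f) {v : V} {w : W}
    (p : H.Walk (f v) w) : ∃ v', f v' = w ∧ ∃ q : G.Walk v v', q.length = p.length := by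
  generalize hx : f v = x at p
  induction p generalizing v with
  | nil => exact ⟨v, hx, .nil, rfl⟩
  | cons hadj p ih =>
    subst hx
    obtain ⟨v₁, hv₁, rfl⟩ := hf hadj.symm
    obtain ⟨v', hv', q, hq⟩ := ih rfl
    exact ⟨v', hv', .cons hv₁.symm q, congrArg Nat.succ hq⟩

theorem reachable_map_apply (f : V → W) {u v : V} (h : G.Reachable u v) :
    (G.map f).Reachable (f u) (f v) := by
  obtain ⟨p⟩ := h
  induction p with
  | nil => rfl
  | @cons u w _ hadj _ ih =>
    by_cases huw : f u = f w
    · rwa [huw]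
    · exact (SimpleGraph.map_adj_apply' hadj huw).reachable.trans ih

theorem exists_walk_length_lt_card_of_fibration [Finite W]
    (hf : Relation.Fibration G.Adj (G.map f).Adj f) {v u : V} (h : G.Reachable v u) :
    ∃ u', f u' = f u ∧ ∃ q : G.Walk v u', q.length < Nat.card W := by
  have := Fintype.ofFinite W
  obtain ⟨p, hp⟩ := (reachable_map_apply f h).exists_isPath
  obtain ⟨u', hu', q, hq⟩ := exists_walk_length_eq_of_fibration hf p
  refine ⟨u', hu', q, ?_⟩
  rw [hq, Nat.card_eq_fintype_card]
  exact hp.length_lt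

end Fibration

namespace PortGraph

variable {G : PortGraph} {u v w : Fin G.n}

theorem Adj.symm (h : G.Adj u v) : G.Adj v u := by
  obtain ⟨i, hi, rfl⟩ := h
  exact ⟨(G.mtch u i).2, G.mtch_lt u i hi, by rw [G.mtch_invol u i hi]⟩

theorem Adj.ne (h : G.Adj u v) : u ≠ v := by
  obtain ⟨i, hi, rfl⟩ := h
  exact (G.no_loops u i hi).symm

/-- The simple graph underlying a port-labeled graph, which makes Mathlib's walks and paths
available. -/
def toSimpleGraph (G : PortGraph) : SimpleGraph (Fin G.n) where
  Adj := G.Adj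
  symm := ⟨fun _ _ => Adj.symm⟩
  loopless := ⟨fun _ h => h.ne rfl⟩

theorem toSimpleGraph_reachable (u v : Fin G.n) : G.toSimpleGraph.Reachable u v :=
  (SimpleGraph.reachable_iff_reflTransGen u v).2 (G.connected u v)

theorem reachIn_of_walk_length_le {k : ℕ} (p : G.toSimpleGraph.Walk u v) (hp : p.length ≤ k) :
    G.reachIn k u v := by
  induction k generalizing v with
  | zero => exact p.eq_of_length_eq_zero (Nat.le_zero.1 hp)
  | succ k ih =>
    by_cases hk : p.length ≤ k
    · exact Or.inl (ih p hk)
    · have hnil : ¬ p.Nil := by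
        rw [← SimpleGraph.Walk.length_eq_zero_iff]
        lia
      have hdrop : p.dropLast.length ≤ k := by
        have := p.length_dropLast_add_one hnil
        lia
      exact Or.inr ⟨p.penultimate, ih p.dropLast hdrop, p.adj_penultimate hnil⟩

theorem view_succ_eq_iff {t : ℕ} :
    G.view (t + 1) u = G.view (t + 1) v ↔ G.deg u = G.deg v ∧ ∀ i < G.deg u,
      (G.mtch u i).2 = (G.mtch v i).2 ∧ G.view t (G.mtch u i).1 = G.view t (G.mtch v i).1 := by
  simp +contextual [view, List.ext_getElem_iff]

theorem exists_adj_view_eq (huv : ∀ t, G.view t u = G.view t v) (h : G.Adj u w) :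
    ∃ w', G.Adj v w' ∧ ∀ t, G.view t w' = G.view t w := by
  obtain ⟨i, hi, rfl⟩ := h
  have hdeg : G.deg u = G.deg v := (view_succ_eq_iff.1 (huv 1)).1
  exact ⟨(G.mtch v i).1, ⟨i, hdeg ▸ hi, rfl⟩,
    fun t => ((view_succ_eq_iff.1 (huv (t + 1))).2 i hi).2.symm⟩

/-- The quotient of a port-labeled graph by equality of views, as a simple graph: ports are
forgotten, and so are the loops that arise from adjacent nodes with equal views. -/
def viewQuotient (G : PortGraph) : SimpleGraph (Quotient G.viewSetoid) :=
  G.toSimpleGraph.map (Quotient.mk G.viewSetoid)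

theorem fibration_viewQuotient (G : PortGraph) :
    Relation.Fibration G.toSimpleGraph.Adj G.viewQuotient.Adj (Quotient.mk G.viewSetoid) := by
  rintro v _ ⟨-, w, u, hwu, rfl, huv⟩
  obtain ⟨w', hvw', hw'⟩ := exists_adj_view_eq (Quotient.exact huv) hwu.symm
  exact ⟨w', hvw'.symm, Quotient.sound hw'⟩

end PortGraph

/-- For every pair of nodes `v`, `u` there is a node `u'` with the same
view as `u` at distance at most `n̂ - 1` from `v` (where `n̂` is the number of classes of
the equal-views relation). -/
theorem exists_view_representative_close (G : PortGraph) (v u : Fin G.n) :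
    ∃ u' : Fin G.n, (∀ t : ℕ, G.view t u' = G.view t u) ∧ G.reachIn (G.nhat - 1) v u' := by
  obtain ⟨u', hu', p, hp⟩ := exists_walk_length_lt_card_of_fibration G.fibration_viewQuotient
    (G.toSimpleGraph_reachable v u)
  exact ⟨u', Quotient.exact hu', PortGraph.reachIn_of_walk_length_le p (Nat.le_sub_one_of_lt hp)⟩
end

section
/- Let Π be any set of pairs (G, v), where G is a port-labeled graph and v a node of G, closed under port-preserving isomorphism. Then Π is single-agent decidable if and only if both Π and its complement are single-agent verifiable; i.e., MAV₁ ∩ co-MAV₁ = MAD₁. -/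
/-- An observation of the agent: the degree of the current node and the port
number through which the agent entered it (`0` in the initial round). -/
abbrev Obs : Type := ℕ × ℕ

/-- An action of a (deciding) mobile agent: either halt with a Boolean decision
(`true` = "yes", `false` = "no"), or move leaving through port `p`. -/
inductive AgentAction : Type
  | halt (decision : Bool)
  | move (p : ℕ)

/-- A single-agent protocol: a function from finite sequences of observations to actions. -/
abbrev AgentProtocol : Type := List Obs → AgentAction

/-- The state of an agent: current position, port of entry (`0` initially), and
the history of observations made so far (including the current one). -/
structure AgentState (G : PortGraph) where
  pos : Fin G.n
  entry : ℕ
  hist : List Obs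

/-- One round of the execution of protocol `σ`. -/
def PortGraph.stepAgent (G : PortGraph) (σ : AgentProtocol) (c : AgentState G) : AgentState G :=
  let next : Fin G.n × ℕ :=
    match σ c.hist with
    | .halt _ => (c.pos, c.entry)
    | .move p =>
        if 1 ≤ p ∧ p - 1 < G.deg c.pos then
          ((G.mtch c.pos (p - 1)).1, (G.mtch c.pos (p - 1)).2 + 1)
        else (c.pos, c.entry)
  ⟨next.1, next.2, c.hist ++ [(G.deg next.1, next.2)]⟩

/-- The execution of protocol `σ` in `G` from start node `v`: state at round `t`. -/
def PortGraph.run (G : PortGraph) (σ : AgentProtocol) (v : Fin G.n) : ℕ → AgentState G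
  | 0 => ⟨v, 0, [(G.deg v, 0)]⟩
  | t + 1 => G.stepAgent σ (G.run σ v t)

/-- The observation made at round `t` of the execution. -/
def PortGraph.obsAt (G : PortGraph) (σ : AgentProtocol) (v : Fin G.n) (t : ℕ) : Obs :=
  (G.deg (G.run σ v t).pos, (G.run σ v t).entry)

/-- The action taken at round `t` of the execution. -/
def PortGraph.actAt (G : PortGraph) (σ : AgentProtocol) (v : Fin G.n) (t : ℕ) : AgentAction :=
  σ (G.run σ v t).hist

/-- The execution halts (for the first time) at round `t` with decision `b`. -/
def PortGraph.haltsAtWith (G : PortGraph) (σ : AgentProtocol) (v : Fin G.n) (t : ℕ) (b : Bool) :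
    Prop :=
  G.actAt σ v t = AgentAction.halt b ∧ ∀ s < t, ∀ b', G.actAt σ v s ≠ AgentAction.halt b'

/-- The execution of `σ` from `v` in `G` halts. -/
def PortGraph.halts (G : PortGraph) (σ : AgentProtocol) (v : Fin G.n) : Prop :=
  ∃ t b, G.haltsAtWith σ v t b

/-- The execution of `σ` from `v` in `G` halts with decision `b`. -/
def PortGraph.decides (G : PortGraph) (σ : AgentProtocol) (v : Fin G.n) (b : Bool) : Prop :=
  ∃ t, G.haltsAtWith σ v t b

/-- `σ` decides the problem `P` (sets of pairs (graph, start node) closed under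
port-preserving isomorphisms): it always halts, with "yes" exactly on instances of `P`. -/
def DecidesProblem (σ : AgentProtocol) (P : (G : PortGraph) → Fin G.n → Prop) : Prop :=
  (∀ (G : PortGraph) (v : Fin G.n), G.halts σ v) ∧
  ∀ (G : PortGraph) (v : Fin G.n), (G.decides σ v true ↔ P G v)

/-- The family `σ` of protocols indexed by certificates (binary strings) verifies `P`. -/
def VerifiesProblem (σ : List Bool → AgentProtocol) (P : (G : PortGraph) → Fin G.n → Prop) :
    Prop :=
  (∀ (x : List Bool) (G : PortGraph) (v : Fin G.n), G.halts (σ x) v) ∧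
  ∀ (G : PortGraph) (v : Fin G.n),
    (P G v → ∃ x, G.decides (σ x) v true) ∧
    (¬ P G v → ∀ x, G.decides (σ x) v false)

/-- `P` is mobile agent decidable by a single agent. -/
def MAD1 (P : (G : PortGraph) → Fin G.n → Prop) : Prop := ∃ σ, DecidesProblem σ P

/-- `P` is mobile agent verifiable by a single agent. -/
def MAV1 (P : (G : PortGraph) → Fin G.n → Prop) : Prop := ∃ σ, VerifiesProblem σ P

/-- A problem closed under port-preserving isomorphisms. -/
def IsoClosed (P : (G : PortGraph) → Fin G.n → Prop) : Prop :=
  ∀ (G H : PortGraph) (e : Fin G.n ≃ Fin H.n), IsPortIso G H e →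
    ∀ v : Fin G.n, (P G v ↔ P H (e v))

/-- `G` is a path: its nodes can be arranged in a sequence so that consecutive
nodes are adjacent, the two end nodes have degree `1` and all other nodes have
degree `2`. -/
def IsPath (G : PortGraph) : Prop :=
  ∃ (_h2 : 2 ≤ G.n) (f : Fin G.n ≃ Fin G.n),
    (∀ (i : ℕ) (h : i + 1 < G.n), G.Adj (f ⟨i, by omega⟩) (f ⟨i + 1, h⟩)) ∧
    G.deg (f ⟨0, by omega⟩) = 1 ∧
    G.deg (f ⟨G.n - 1, by omega⟩) = 1 ∧
    ∀ (i : ℕ) (h : i < G.n), 0 < i → i + 1 < G.n → G.deg (f ⟨i, h⟩) = 2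

/-!
Certificates can be enumerated and every verifying protocol halts, so no interleaving is needed: a
deciding agent runs the protocols of both verifiers one after the other, walking back to its start
node after each run by leaving every node through the port by which it was entered. It stops at the
first run that says yes, and answers according to which of the two verifiers that run belongs to.
Since a verifier never says yes on a negative instance, the answer is correct, and since either the
instance or its negation has a certificate, the search ends. Conversely, a decider is a verifier
that ignores its certificate, and exchanging its two answers decides the complement.
-/

namespace AgentAction

/-- The action that leaves the agent where it is: port numbers start at `1`, so a move through
port `0` is not possible. -/
abbrev stay : AgentAction := .move 0

/-- The action with the opposite decision. -/
def negate : AgentAction → AgentAction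
  | .halt b => .halt (!b)
  | .move p => .move p

@[simp]
lemma negate_eq_halt_iff {a : AgentAction} {b : Bool} : a.negate = .halt b ↔ a = .halt (!b) := by
  cases a <;> simp [negate, Bool.not_eq_eq_eq_not]

end AgentAction

namespace PortGraph

variable {G : PortGraph} {σ : AgentProtocol} {u v : Fin G.n} {b c : Bool} {p t : ℕ}

section Decisions

lemma halts_iff_decides : G.halts σ v ↔ G.decides σ v true ∨ G.decides σ v false := by
  rw [halts, exists_comm, Bool.exists_bool, or_comm]
  rfl

lemma decides_unique (hb : G.decides σ v b) (hc : G.decides σ v c) : b = c := by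
  obtain ⟨s, hs, hs'⟩ := hb
  obtain ⟨t, ht, ht'⟩ := hc
  rcases lt_trichotomy s t with h | rfl | h
  · exact absurd hs (ht' s h b)
  · exact AgentAction.halt.inj (hs.symm.trans ht)
  · exact absurd ht (hs' t h c)

lemma run_negate (G : PortGraph) (σ : AgentProtocol) (v : Fin G.n) (t : ℕ) :
    G.run (fun h => (σ h).negate) v t = G.run σ v t := by
  induction t with
  | zero => rfl
  | succ t ih =>
    simp only [run, ih, stepAgent]
    cases σ (G.run σ v t).hist <;> rfl

lemma decides_negate_iff : G.decides (fun h => (σ h).negate) v b ↔ G.decides σ v (!b) := by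
  have actAt_negate (t : ℕ) : G.actAt (fun h => (σ h).negate) v t = (G.actAt σ v t).negate := by
    rw [actAt, run_negate, actAt]
  simp only [decides, haltsAtWith, actAt_negate, ne_eq, AgentAction.negate_eq_halt_iff,
    Bool.forall_bool, Bool.not_false, Bool.not_true, and_comm]

end Decisions

section Ports

/-- The node reached from `u` through port `p`. Ports are numbered from `1` but indexed from `0` in
`mtch`; the value is irrelevant unless `p ∈ Finset.Icc 1 (G.deg u)`. -/
def neighbor (G : PortGraph) (u : Fin G.n) (p : ℕ) : Fin G.n := (G.mtch u (p - 1)).1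

/-- The port by which an agent leaving `u` through port `p` enters `G.neighbor u p`, with the
conventions of `PortGraph.neighbor`. -/
def entryPort (G : PortGraph) (u : Fin G.n) (p : ℕ) : ℕ := (G.mtch u (p - 1)).2 + 1

lemma entryPort_mem_Icc (hp : p ∈ Finset.Icc 1 (G.deg u)) :
    G.entryPort u p ∈ Finset.Icc 1 (G.deg (G.neighbor u p)) := by
  rw [Finset.mem_Icc] at hp ⊢
  exact ⟨Nat.succ_pos _, G.mtch_lt u (p - 1) (by lia)⟩

lemma neighbor_entryPort (hp : p ∈ Finset.Icc 1 (G.deg u)) :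
    G.neighbor (G.neighbor u p) (G.entryPort u p) = u := by
  rw [Finset.mem_Icc] at hp
  exact congrArg Prod.fst (G.mtch_invol u (p - 1) (by lia))

/-- `G.Follows u l v` means that an agent starting at `u` and leaving successive nodes through the
ports in `l` makes only possible moves and ends at `v`. -/
def Follows (G : PortGraph) : Fin G.n → List ℕ → Fin G.n → Prop
  | u, [], v => u = v
  | u, p :: l, v => p ∈ Finset.Icc 1 (G.deg u) ∧ G.Follows (G.neighbor u p) l v

lemma Follows.cons_entryPort {l : List ℕ} (h : G.Follows u l v)
    (hp : p ∈ Finset.Icc 1 (G.deg u)) :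
    G.Follows (G.neighbor u p) (G.entryPort u p :: l) v :=
  ⟨entryPort_mem_Icc hp, by rwa [neighbor_entryPort hp]⟩

end Ports

section Rounds

lemma run_succ_of_mem (hσ : G.actAt σ v t = .move p)
    (hp : p ∈ Finset.Icc 1 (G.deg (G.run σ v t).pos)) :
    G.run σ v (t + 1) =
      let u := (G.run σ v t).pos
      ⟨G.neighbor u p, G.entryPort u p,
        (G.run σ v t).hist ++ [(G.deg (G.neighbor u p), G.entryPort u p)]⟩ := by
  have hp' : 1 ≤ p ∧ p - 1 < G.deg (G.run σ v t).pos := by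
    rw [Finset.mem_Icc] at hp
    lia
  rw [actAt] at hσ
  simp only [run, stepAgent, hσ, if_pos hp', neighbor, entryPort]

lemma run_succ_of_notMem (hσ : G.actAt σ v t = .move p)
    (hp : p ∉ Finset.Icc 1 (G.deg (G.run σ v t).pos)) :
    G.run σ v (t + 1) =
      ⟨(G.run σ v t).pos, (G.run σ v t).entry, (G.run σ v t).hist ++ [G.obsAt σ v t]⟩ := by
  have hp' : ¬(1 ≤ p ∧ p - 1 < G.deg (G.run σ v t).pos) := by
    rw [Finset.mem_Icc] at hp
    lia
  rw [actAt] at hσ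
  simp only [run, stepAgent, hσ, if_neg hp', obsAt]

lemma getLastD_hist_run (G : PortGraph) (σ : AgentProtocol) (v : Fin G.n) (t : ℕ) (o : Obs) :
    (G.run σ v t).hist.getLastD o = G.obsAt σ v t := by
  cases t with
  | zero => rfl
  | succ t => simp [obsAt, run, stepAgent]

lemma forall_lt_succ_ne_halt (h : ∀ s < t, ∀ b, G.actAt σ v s ≠ .halt b)
    (hσ : G.actAt σ v t = .move p) : ∀ s < t + 1, ∀ b, G.actAt σ v s ≠ .halt b :=
  Nat.forall_lt_succ_right.2 ⟨h, fun _ => hσ ▸ AgentAction.noConfusion⟩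

end Rounds

end PortGraph

/-- An agent that keeps a memory in `M`, updates it after every observation, including the initial
one, and chooses its actions from the memory alone. -/
structure MemoryAgent (M : Type*) where
  initial : M
  update : M → Obs → M
  act : M → AgentAction

namespace MemoryAgent

variable {M : Type*} {A : MemoryAgent M} {G : PortGraph} {u v : Fin G.n} {m : M} {p : ℕ}

/-- The memory of the agent after a sequence of observations. -/
def memory (A : MemoryAgent M) (h : List Obs) : M := h.foldl A.update A.initial

/-- The protocol carried out by the agent. -/
def toProtocol (A : MemoryAgent M) : AgentProtocol := fun h => A.act (A.memory h)

/-- `A.Visits v u m` means that the agent, started at `v`, arrives at some round at `u` with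
memory `m`, without having halted in an earlier round. -/
def Visits (A : MemoryAgent M) (v u : Fin G.n) (m : M) : Prop :=
  ∃ t, (G.run A.toProtocol v t).pos = u ∧ A.memory (G.run A.toProtocol v t).hist = m ∧
    ∀ s < t, ∀ b, G.actAt A.toProtocol v s ≠ .halt b

lemma memory_concat (A : MemoryAgent M) (h : List Obs) (o : Obs) :
    A.memory (h ++ [o]) = A.update (A.memory h) o := by
  rw [memory, List.foldl_concat, memory]

lemma visits_start (A : MemoryAgent M) (v : Fin G.n) :
    A.Visits v v (A.update A.initial (G.deg v, 0)) :=
  ⟨0, rfl, rfl, fun _ hs => absurd hs (Nat.not_lt_zero _)⟩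

lemma Visits.decides {b : Bool} (h : A.Visits v u m) (hm : A.act m = .halt b) :
    G.decides A.toProtocol v b := by
  obtain ⟨t, -, rfl, not_halted⟩ := h
  exact ⟨t, hm, not_halted⟩

lemma Visits.move (h : A.Visits v u m) (hm : A.act m = .move p)
    (hp : p ∈ Finset.Icc 1 (G.deg u)) :
    A.Visits v (G.neighbor u p) (A.update m (G.deg (G.neighbor u p), G.entryPort u p)) := by
  obtain ⟨t, rfl, rfl, not_halted⟩ := h
  have run_succ := PortGraph.run_succ_of_mem (σ := A.toProtocol) hm hp
  exact ⟨t + 1, by rw [run_succ], by rw [run_succ, memory_concat],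
    PortGraph.forall_lt_succ_ne_halt not_halted hm⟩

lemma Visits.stay (h : A.Visits v u m) (hm : A.act m = .move p)
    (hp : p ∉ Finset.Icc 1 (G.deg u)) :
    ∃ e, A.Visits v u (A.update m (G.deg u, e)) := by
  obtain ⟨t, rfl, rfl, not_halted⟩ := h
  have run_succ := PortGraph.run_succ_of_notMem (σ := A.toProtocol) hm hp
  exact ⟨_, t + 1, by rw [run_succ], by rw [run_succ, memory_concat]; rfl,
    PortGraph.forall_lt_succ_ne_halt not_halted hm⟩

end MemoryAgent

/-- The memory of the agent that runs the protocols of a sequence one after the other. In both modes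
`back` lists the ports that lead from the current node back to the start node. -/
inductive SearchMemory : Type
  /-- protocol `k` is being run and has made the observations `h` so far -/
  | simulate (k : ℕ) (h : List Obs) (back : List ℕ)
  /-- the agent returns to the start node in order to run protocol `k` -/
  | backtrack (k : ℕ) (back : List ℕ)

/-- The agent that runs the protocols `ρ 0, ρ 1, …` one after the other from its start node, until
one of them, say `ρ k`, says yes; it then halts with decision `verdict k`. -/
def search (ρ : ℕ → AgentProtocol) (verdict : ℕ → Bool) : MemoryAgent SearchMemory where
  initial := .backtrack 0 []
  update
    | .simulate k h back, o =>
      match ρ k h with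
      | .halt _ => .backtrack (k + 1) back
      | .move p =>
        -- may show an entry port from an earlier run.
        if p ∈ Finset.Icc 1 (h.getLastD (0, 0)).1 then .simulate k (h ++ [o]) (o.2 :: back)
        else .simulate k (h ++ [h.getLastD (0, 0)]) back
    | .backtrack k [], o => .simulate k [(o.1, 0)] []
    | .backtrack k (_ :: back), _ => .backtrack k back
  act
    | .simulate k h _ =>
      match ρ k h with
      | .halt true => .halt (verdict k)
      | .halt false => .stay
      | .move p => .move p
    | .backtrack _ [] => .stay
    | .backtrack _ (p :: _) => .move p

section Search

variable {ρ : ℕ → AgentProtocol} {verdict : ℕ → Bool} {G : PortGraph} {u v : Fin G.n} {i k p : ℕ}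

/-- Before halting, the searching agent arrives at a round in which it has simulated the first `i`
rounds of `ρ k` and knows a way back to its start node `v`. -/
def SearchSimulates (ρ : ℕ → AgentProtocol) (verdict : ℕ → Bool) (v : Fin G.n) (k i : ℕ) : Prop :=
  ∃ back, G.Follows (G.run (ρ k) v i).pos back v ∧
    (search ρ verdict).Visits v (G.run (ρ k) v i).pos (.simulate k (G.run (ρ k) v i).hist back)

lemma searchSimulates_zero_zero (ρ : ℕ → AgentProtocol) (verdict : ℕ → Bool) (v : Fin G.n) :
    SearchSimulates ρ verdict v 0 0 :=
  ⟨[], rfl, (search ρ verdict).visits_start v⟩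

lemma SearchSimulates.succ (h : SearchSimulates ρ verdict v k i)
    (hρ : G.actAt (ρ k) v i = .move p) : SearchSimulates ρ verdict v k (i + 1) := by
  obtain ⟨back, follows, visits⟩ := h
  have hρ' : ρ k (G.run (ρ k) v i).hist = .move p := hρ
  have act_eq :
      (search ρ verdict).act (.simulate k (G.run (ρ k) v i).hist back) = .move p := by
    simp only [search, hρ']
  by_cases hp : p ∈ Finset.Icc 1 (G.deg (G.run (ρ k) v i).pos)
  · have visits' := visits.move act_eq hp
    simp only [search, hρ', PortGraph.getLastD_hist_run, PortGraph.obsAt, if_pos hp] at visits'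
    rw [SearchSimulates, PortGraph.run_succ_of_mem hρ hp]
    exact ⟨_, follows.cons_entryPort hp, visits'⟩
  · obtain ⟨_, visits'⟩ := visits.stay act_eq hp
    simp only [search, hρ', PortGraph.getLastD_hist_run, PortGraph.obsAt, if_neg hp] at visits'
    rw [SearchSimulates, PortGraph.run_succ_of_notMem hρ hp]
    exact ⟨back, follows, visits'⟩

lemma SearchSimulates.of_not_halted (h : SearchSimulates ρ verdict v k 0)
    (not_halted : ∀ s < i, ∀ b, G.actAt (ρ k) v s ≠ .halt b) :
    SearchSimulates ρ verdict v k i := by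
  induction i with
  | zero => exact h
  | succ i ih =>
    obtain ⟨not_halted, not_halt⟩ := Nat.forall_lt_succ_right.1 not_halted
    cases hρ : G.actAt (ρ k) v i with
    | halt b => exact absurd hρ (not_halt b)
    | move p => exact (ih not_halted).succ hρ

lemma searchSimulates_zero_of_visits_backtrack {back : List ℕ} (follows : G.Follows u back v)
    (visits : (search ρ verdict).Visits v u (.backtrack k back)) :
    SearchSimulates ρ verdict v k 0 := by
  induction back generalizing u with
  | nil =>
    obtain rfl : u = v := follows
    obtain ⟨_, visits'⟩ := visits.stay (p := 0) rfl (by simp)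
    exact ⟨[], rfl, visits'⟩
  | cons p back ih => exact ih follows.2 (visits.move rfl follows.1)

lemma SearchSimulates.next (h : SearchSimulates ρ verdict v k 0)
    (hρ : G.decides (ρ k) v false) : SearchSimulates ρ verdict v (k + 1) 0 := by
  obtain ⟨i, halt, not_halted⟩ := hρ
  obtain ⟨back, follows, visits⟩ := h.of_not_halted not_halted
  have halt' : ρ k (G.run (ρ k) v i).hist = .halt false := halt
  obtain ⟨_, visits'⟩ := visits.stay (p := 0) (by simp only [search, halt']) (by simp)
  simp only [search, halt'] at visits'
  exact searchSimulates_zero_of_visits_backtrack follows visits'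

lemma searchSimulates_zero_of_decides_false (hρ : ∀ j < k, G.decides (ρ j) v false) :
    SearchSimulates ρ verdict v k 0 := by
  induction k with
  | zero => exact searchSimulates_zero_zero ρ verdict v
  | succ k ih =>
    obtain ⟨hρ, no⟩ := Nat.forall_lt_succ_right.1 hρ
    exact (ih hρ).next no

lemma decides_search (hno : ∀ j < k, G.decides (ρ j) v false) (hyes : G.decides (ρ k) v true) :
    G.decides (search ρ verdict).toProtocol v (verdict k) := by
  obtain ⟨i, halt, not_halted⟩ := hyes
  obtain ⟨back, -, visits⟩ :=
    (searchSimulates_zero_of_decides_false hno).of_not_halted not_halted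
  have halt' : ρ k (G.run (ρ k) v i).hist = .halt true := halt
  exact visits.decides (by simp only [search, halt'])

end Search

theorem exists_protocol_decides_verdict {ι : Type*} [Countable ι] (ρ : ι → AgentProtocol)
    (verdict : ι → Bool) :
    ∃ π : AgentProtocol, ∀ (G : PortGraph) (v : Fin G.n), (∀ i, G.halts (ρ i) v) →
      (∃ i, G.decides (ρ i) v true) →
        ∃ i, G.decides (ρ i) v true ∧ G.decides π v (verdict i) := by
  classical
  rcases isEmpty_or_nonempty ι with _ | _
  · exact ⟨fun _ => .stay, fun _ _ _ ⟨i, _⟩ => isEmptyElim i⟩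
  obtain ⟨f, f_surjective⟩ := exists_surjective_nat ι
  refine ⟨(search (ρ ∘ f) (verdict ∘ f)).toProtocol, fun G v halts exists_yes => ?_⟩
  have exists_yes' : ∃ k, G.decides (ρ (f k)) v true := f_surjective.exists.1 exists_yes
  have no_before (j : ℕ) (hj : j < Nat.find exists_yes') : G.decides (ρ (f j)) v false :=
    (PortGraph.halts_iff_decides.1 (halts (f j))).resolve_left (Nat.find_min exists_yes' hj)
  exact ⟨f (Nat.find exists_yes'), Nat.find_spec exists_yes',
    decides_search no_before (Nat.find_spec exists_yes')⟩

section Problems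

variable {P : (G : PortGraph) → Fin G.n → Prop}

lemma decidesProblem_iff {σ : AgentProtocol} :
    DecidesProblem σ P ↔ ∀ (G : PortGraph) (v : Fin G.n),
      (P G v → G.decides σ v true) ∧ (¬P G v → G.decides σ v false) := by
  refine ⟨fun h G v => ⟨(h.2 G v).2, fun hn => ?_⟩, fun h => ⟨fun G v => ?_, fun G v => ?_⟩⟩
  · exact (PortGraph.halts_iff_decides.1 (h.1 G v)).resolve_left (mt (h.2 G v).1 hn)
  · exact PortGraph.halts_iff_decides.2 ((em (P G v)).imp (h G v).1 (h G v).2)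
  · refine ⟨fun yes => ?_, (h G v).1⟩
    by_contra hn
    exact Bool.noConfusion (PortGraph.decides_unique yes ((h G v).2 hn))

lemma VerifiesProblem.of_decides_true {σ : List Bool → AgentProtocol} (h : VerifiesProblem σ P)
    {G : PortGraph} {v : Fin G.n} {x : List Bool} (yes : G.decides (σ x) v true) : P G v := by
  by_contra hn
  exact Bool.noConfusion (PortGraph.decides_unique yes ((h.2 G v).2 hn x))

theorem MAD1.mav1 (h : MAD1 P) : MAV1 P := by
  obtain ⟨σ, hσ⟩ := h
  refine ⟨fun _ => σ, fun _ => hσ.1, fun G v => ?_⟩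
  obtain ⟨yes, no⟩ := decidesProblem_iff.1 hσ G v
  exact ⟨fun hp => ⟨[], yes hp⟩, fun hn _ => no hn⟩

theorem MAD1.compl (h : MAD1 P) : MAD1 fun G v => ¬P G v := by
  obtain ⟨σ, hσ⟩ := h
  refine ⟨fun h => (σ h).negate, decidesProblem_iff.2 fun G v => ?_⟩
  obtain ⟨yes, no⟩ := decidesProblem_iff.1 hσ G v
  exact ⟨fun hn => PortGraph.decides_negate_iff.2 (no hn),
    fun hp => PortGraph.decides_negate_iff.2 (yes (not_not.1 hp))⟩

theorem MAV1.mad1_of_compl (h : MAV1 P) (h_compl : MAV1 fun G v => ¬P G v) : MAD1 P := by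
  obtain ⟨σ, hσ⟩ := h
  obtain ⟨τ, hτ⟩ := h_compl
  obtain ⟨π, hπ⟩ := exists_protocol_decides_verdict (Sum.elim σ τ) Sum.isLeft
  have halts (G : PortGraph) (v : Fin G.n) : ∀ i, G.halts (Sum.elim σ τ i) v :=
    Sum.forall.2 ⟨fun x => hσ.1 x G v, fun x => hτ.1 x G v⟩
  refine ⟨π, decidesProblem_iff.2 fun G v => ⟨fun hp => ?_, fun hn => ?_⟩⟩
  · obtain ⟨x, hx⟩ := (hσ.2 G v).1 hp
    obtain ⟨y | y, yes, decides⟩ := hπ G v (halts G v) ⟨.inl x, hx⟩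
    · exact decides
    · exact absurd hp (hτ.of_decides_true yes)
  · obtain ⟨x, hx⟩ := (hτ.2 G v).1 hn
    obtain ⟨y | y, yes, decides⟩ := hπ G v (halts G v) ⟨.inr x, hx⟩
    · exact absurd (hσ.of_decides_true yes) hn
    · exact decides

end Problems

/-- For a problem closed under port-preserving isomorphisms,
single-agent decidability is equivalent to single-agent verifiability of the problem and
of its complement: `MAV₁ ∩ co-MAV₁ = MAD₁`. -/
theorem MAD1_iff_MAV1_and_coMAV1 (P : (G : PortGraph) → Fin G.n → Prop)
    (hP : IsoClosed P) :
    MAD1 P ↔ (MAV1 P ∧ MAV1 fun G v => ¬ P G v) :=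
  ⟨fun h => ⟨h.mav1, h.compl.mav1⟩, fun ⟨h, h_compl⟩ => h.mad1_of_compl h_compl⟩
end

section
/- There exist two port-labeled graphs G and H with the same number of nodes, a node u of G and a node v of H with V^t(u) = V^t(v) for every t ≥ 0 (hence G and H have the same quotient), such that there is no port-preserving isomorphism between G and H. -/
/-!
On `ℤ/6`, let port 1 of every node `x` lead to `x + 3`, port 2 to `x + a` and port 3 to `x - a`.
An edge left through port 1, 2 or 3 is entered through port 1, 3 or 2 whatever the node, so the
views depend neither on the node nor on `a`. But following port 2 three times returns to the start
when `a = 2` (the triangular prism) and not when `a = 1` (the complete bipartite graph `K₃,₃`),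
and an isomorphism would preserve such closed walks.
-/

namespace PortGraph

theorem view_eq_of_bisimulation {G H : PortGraph} {R : Fin G.n → Fin H.n → Prop}
    (deg_eq : ∀ u v, R u v → G.deg u = H.deg v)
    (port_eq : ∀ u v, R u v → ∀ i < G.deg u, (G.mtch u i).2 = (H.mtch v i).2)
    (rel_mtch : ∀ u v, R u v → ∀ i < G.deg u, R (G.mtch u i).1 (H.mtch v i).1)
    (t : ℕ) {u : Fin G.n} {v : Fin H.n} (huv : R u v) : G.view t u = H.view t v := by
  induction t generalizing u v with
  | zero => rfl
  | succ t ih =>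
    simp only [view, ← deg_eq u v huv, ViewTree.node.injEq]
    refine List.map_congr_left fun i hi => ?_
    have hi : i < G.deg u := List.mem_range.mp hi
    rw [port_eq u v huv i hi, ih (rel_mtch u v huv i hi)]

/-- The node reached from `v` through port `i + 1`; a junk value unless `i < G.deg v`. -/
def nbr (G : PortGraph) (i : ℕ) (v : Fin G.n) : Fin G.n := (G.mtch v i).1

end PortGraph

theorem IsPortIso.semiconj_nbr {G H : PortGraph} {e : Fin G.n ≃ Fin H.n} (he : IsPortIso G H e)
    {i : ℕ} (hi : ∀ v, i < G.deg v) : Function.Semiconj e (G.nbr i) (H.nbr i) :=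
  fun v => (congrArg Prod.fst (he.2 v i (hi v))).symm

theorem reflTransGen_add_of_closure_eq_top {A ι : Type*} [AddGroup A] {s : ι → A} {I : Set ι}
    (hs : AddSubmonoid.closure (s '' I) = ⊤) (u v : A) :
    Relation.ReflTransGen (fun a b => ∃ i ∈ I, a + s i = b) u v := by
  suffices ∀ x ∈ AddSubmonoid.closure (s '' I), ∀ w,
      Relation.ReflTransGen (fun a b => ∃ i ∈ I, a + s i = b) w (w + x) by
    simpa using this (-u + v) (by simp [hs]) u
  intro x hx
  induction hx using AddSubmonoid.closure_induction with
  | mem x hx =>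
    obtain ⟨i, hi, rfl⟩ := hx
    exact fun w => .single ⟨i, hi, rfl⟩
  | zero => exact fun w => by rw [add_zero]
  | add x y _ _ hx hy => exact fun w => by simpa only [add_assoc] using (hx w).trans (hy (w + x))

/-- The steps `s 0, …, s (d - 1)` are the elements of a connection set of a connected circulant
graph on `Fin n`, each listed once, and `τ` takes the index of a step to that of its inverse.
Indices are zero-based ports, and values at indices `i ≥ d` are irrelevant. -/
structure IsCirculantLabeling {n : ℕ} [NeZero n] (d : ℕ) (τ : ℕ → ℕ) (s : ℕ → Fin n) : Prop where
  lt : ∀ i < d, τ i < d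
  neg : ∀ i < d, s (τ i) = -s i
  ne_zero : ∀ i < d, s i ≠ 0
  inj : ∀ i < d, ∀ j < d, s i = s j → i = j
  closure_eq_top : AddSubmonoid.closure (s '' Set.Iio d) = ⊤

namespace IsCirculantLabeling

variable {n : ℕ} [NeZero n] {d : ℕ} {τ : ℕ → ℕ} {s : ℕ → Fin n}

theorem leftInvOn (h : IsCirculantLabeling d τ s) : Set.LeftInvOn τ τ (Set.Iio d) := by
  intro i hi
  have hτi : τ i < d := h.lt i hi
  exact h.inj _ (h.lt _ hτi) i hi <| by rw [h.neg _ hτi, h.neg i hi, neg_neg]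

end IsCirculantLabeling

namespace PortGraph

section Circulant

variable {n : ℕ} [NeZero n] {d : ℕ} {τ : ℕ → ℕ} {s : ℕ → Fin n}

/-- The circulant port graph on `Fin n`: port `i + 1` of `v` leads to `v + s i` and is matched
there with port `τ i + 1`. -/
def circulant (h : IsCirculantLabeling d τ s) : PortGraph where
  n := n
  npos := NeZero.pos n
  deg _ := d
  mtch v i := (v + s i, τ i)
  mtch_lt _ := h.lt
  mtch_invol v i hi := by rw [h.neg i hi, add_neg_cancel_right, h.leftInvOn hi]
  no_loops v i hi := by simpa using h.ne_zero i hi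
  no_multi v i j hi hj hij := h.inj i hi j hj (add_left_cancel hij)
  connected := reflTransGen_add_of_closure_eq_top h.closure_eq_top

theorem view_circulant_eq {m : ℕ} [NeZero m] {r : ℕ → Fin m} (hs : IsCirculantLabeling d τ s)
    (hr : IsCirculantLabeling d τ r) (t : ℕ) (u : Fin n) (v : Fin m) :
    (circulant hs).view t u = (circulant hr).view t v :=
  view_eq_of_bisimulation (G := circulant hs) (H := circulant hr) (R := fun _ _ => True)
    (fun _ _ _ => rfl) (fun _ _ _ _ _ => rfl) (fun _ _ _ _ _ => trivial) t trivial

theorem isPeriodicPt_nbr_circulant_iff (h : IsCirculantLabeling d τ s) (i k : ℕ) (v : Fin n) :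
    Function.IsPeriodicPt ((circulant h).nbr i) k v ↔ k • s i = 0 :=
  calc Function.IsPeriodicPt ((circulant h).nbr i) k v
    _ ↔ (· + s i)^[k] v = v := Iff.rfl
    _ ↔ v + k • s i = v := by rw [add_right_iterate]
    _ ↔ k • s i = 0 := add_eq_left

end Circulant

end PortGraph

/-- The steps `3, a, -a` on `Fin 6`, listed in the order of the ports. -/
def cubicSteps (a : Fin 6) : ℕ → Fin 6
  | 0 => 3
  | 1 => a
  | _ => -a

theorem closure_cubicSteps_eq_top {a : Fin 6} (ha0 : a ≠ 0) (ha3 : a ≠ 3) :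
    AddSubmonoid.closure (cubicSteps a '' Set.Iio 3) = ⊤ := by
  refine (AddSubmonoid.eq_top_iff' _).mpr fun x => ?_
  obtain ⟨k, l, rfl⟩ : ∃ k l : Fin 6, x = (k : ℕ) • 3 + (l : ℕ) • a := by decide +revert
  have three_mem : 3 ∈ AddSubmonoid.closure (cubicSteps a '' Set.Iio 3) :=
    AddSubmonoid.subset_closure ⟨0, by simp, rfl⟩
  have step_mem : a ∈ AddSubmonoid.closure (cubicSteps a '' Set.Iio 3) :=
    AddSubmonoid.subset_closure ⟨1, by simp, rfl⟩
  exact add_mem (nsmul_mem three_mem k) (nsmul_mem step_mem l)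

theorem isCirculantLabeling_cubicSteps {a : Fin 6} (ha0 : a ≠ 0) (ha3 : a ≠ 3) :
    IsCirculantLabeling 3 (Equiv.swap 1 2) (cubicSteps a) where
  lt := by decide
  neg := by decide +revert
  ne_zero := by decide +revert
  inj := by decide +revert
  closure_eq_top := closure_cubicSteps_eq_top ha0 ha3

/-- There are two non-isomorphic port-labeled graphs with the same
number of nodes containing nodes with equal views (hence with the same quotient). -/
theorem exists_view_eq_not_isomorphic :
    ∃ (G H : PortGraph) (u : Fin G.n) (v : Fin H.n),
      G.n = H.n ∧ (∀ t : ℕ, G.view t u = H.view t v) ∧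
      ¬ ∃ e : Fin G.n ≃ Fin H.n, IsPortIso G H e := by
  have hprism := isCirculantLabeling_cubicSteps (a := 2) (by decide) (by decide)
  have hbipartite := isCirculantLabeling_cubicSteps (a := 1) (by decide) (by decide)
  refine ⟨.circulant hprism, .circulant hbipartite, (0 : Fin 6), (0 : Fin 6), rfl,
    fun t => PortGraph.view_circulant_eq hprism hbipartite t 0 0, ?_⟩
  rintro ⟨e, he⟩
  have closed_prism : Function.IsPeriodicPt ((PortGraph.circulant hprism).nbr 1) 3 (0 : Fin 6) :=
    (PortGraph.isPeriodicPt_nbr_circulant_iff hprism 1 3 0).mpr (by decide)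
  have closed_bipartite :
      Function.IsPeriodicPt ((PortGraph.circulant hbipartite).nbr 1) 3 (e (0 : Fin 6)) :=
    closed_prism.map (he.semiconj_nbr fun _ => Nat.one_lt_ofNat)
  have three_nsmul_one : 3 • (1 : Fin 6) = 0 :=
    (PortGraph.isPeriodicPt_nbr_circulant_iff hbipartite 1 3 _).mp closed_bipartite
  exact absurd three_nsmul_one (by decide)
end

section
/- There exists a protocol for synchronous mobile agents, parameterized by the agent's identity and the team size k, such that for every k > 1, every port-labeled graph G (of unknown size), and every initial placement of k agents with distinct positive-integer identities at nodes of G (possibly several agents at the same node), when all k agents start the protocol simultaneously there is a round at which all k agents are located at the same node. -/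
/-- Observation of an agent in a team: degree of the current node, entry port
(`0` initially), and the set of identities of the agents currently at the node. -/
abbrev MObs : Type := ℕ × ℕ × Finset ℕ

inductive MAction : Type
  | stay
  | move (p : ℕ)

/-- A protocol for a team of agents, parameterized by the agent's identity and
the team size, mapping histories of observations to actions. -/
abbrev MProtocol : Type := ℕ → ℕ → List MObs → MAction

structure MState (G : PortGraph) (k : ℕ) where
  pos : Fin k → Fin G.n
  entry : Fin k → ℕ
  hist : Fin k → List MObs

def mObs (G : PortGraph) (k : ℕ) (ident : Fin k → ℕ)
    (pos : Fin k → Fin G.n) (entry : Fin k → ℕ) (a : Fin k) : MObs :=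
  (G.deg (pos a), entry a, (Finset.univ.filter fun b => pos b = pos a).image ident)

def mStep (G : PortGraph) (k : ℕ) (ident : Fin k → ℕ) (σ : MProtocol)
    (c : MState G k) : MState G k :=
  let next : Fin k → Fin G.n × ℕ := fun a =>
    match σ (ident a) k (c.hist a) with
    | .stay => (c.pos a, c.entry a)
    | .move p =>
        if 1 ≤ p ∧ p - 1 < G.deg (c.pos a) then
          ((G.mtch (c.pos a) (p - 1)).1, (G.mtch (c.pos a) (p - 1)).2 + 1)
        else (c.pos a, c.entry a)
  { pos := fun a => (next a).1
    entry := fun a => (next a).2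
    hist := fun a => c.hist a ++ [mObs G k ident (fun b => (next b).1) (fun b => (next b).2) a] }

/-- The synchronous execution of protocol `σ` by a team of `k` agents with
identities `ident` starting at nodes `start`. -/
def mRun (G : PortGraph) (k : ℕ) (ident : Fin k → ℕ) (σ : MProtocol)
    (start : Fin k → Fin G.n) : ℕ → MState G k
  | 0 => ⟨start, fun _ => 0, fun a => [mObs G k ident start (fun _ => 0) a]⟩
  | t + 1 => mStep G k ident σ (mRun G k ident σ start t)

/-!
Let the agents be oblivious: agent `i` takes port `s i t` in round `t`, whatever it observes. For a
fixed team in a fixed graph, the schedules `s` that gather the team form an open set, because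
gathering by round `t` depends on finitely many values of `s`. This set is dense: after any finite
prefix, the agents can still be sent to a common node along paths, and their schedules can be
altered independently since their identities are distinct. Up to the values of `mtch` that the
agents never see there are only countably many graphs, hence countably many teams, and by the Baire
category theorem some schedule gathers all of them.
-/

open Filter Topology

section Walk

variable {V A : Type*} (step : V → A → V)

/-- The state after `t` rounds of the deterministic automaton with transition function `step` that
starts in state `v` and reads the input `w`. For us it is the trajectory of one oblivious agent. -/
def walk (w : ℕ → A) (v : V) : ℕ → V
  | 0 => v
  | t + 1 => step (walk w v t) (w t)

/-- The input that agrees with `s` before round `T` and runs `w` from the start afterwards. -/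
def splice (s : ℕ → A) (T : ℕ) (w : ℕ → A) (t : ℕ) : A :=
  if t < T then s t else w (t - T)

lemma walk_splice_of_le (s w : ℕ → A) (v : V) {T t : ℕ} (ht : t ≤ T) :
    walk step (splice s T w) v t = walk step s v t := by
  induction t with
  | zero => rfl
  | succ t ih => simp only [walk, ih (by lia), splice, if_pos (show t < T by lia)]

lemma walk_splice_add (s w : ℕ → A) (v : V) (T t : ℕ) :
    walk step (splice s T w) v (T + t) = walk step w (walk step s v T) t := by
  induction t with
  | zero => exact walk_splice_of_le step s w v le_rfl
  | succ t ih =>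
    rw [← Nat.add_assoc]
    simp [walk, ih, splice]

lemma walk_const_of_fixed {v : V} {p : A} (h : step v p = v) (t : ℕ) :
    walk step (fun _ => p) v t = v := by
  induction t with
  | zero => rfl
  | succ t ih => rw [walk, ih, h]

lemma isLocallyConstant_walk [TopologicalSpace A] [DiscreteTopology A] (v : V) (t : ℕ) :
    IsLocallyConstant fun w : ℕ → A => walk step w v t := by
  induction t with
  | zero => exact IsLocallyConstant.const v
  | succ t ih =>
    exact ih.comp₂ ((IsLocallyConstant.iff_continuous _).2 (continuous_apply t)) step

lemma tendsto_splice [TopologicalSpace A] (s : ℕ → A) (w : ℕ → ℕ → A) :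
    Tendsto (fun T => splice s T (w T)) atTop (𝓝 s) :=
  tendsto_pi_nhds.2 fun t => tendsto_nhds_of_eventually_eq <|
    (eventually_gt_atTop t).mono fun _ hT => if_pos hT

end Walk

section Gathering

variable {V A ι α : Type*} (step : V → A → V)

/-- The schedule `s`, giving an input to every identity, brings the team with identities `ident`
and initial states `start` to a common state in some round. -/
def Gathers (ident : α → ι) (start : α → V) (s : ι → ℕ → A) : Prop :=
  ∃ t z, ∀ a, walk step (s (ident a)) (start a) t = z

lemma isOpen_setOf_gathers [Finite α] [TopologicalSpace A] [DiscreteTopology A]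
    (ident : α → ι) (start : α → V) : IsOpen {s | Gathers step ident start s} := by
  simp only [Gathers, Set.ofPred_exists, Set.ofPred_forall]
  exact isOpen_iUnion fun t => isOpen_iUnion fun z => isOpen_iInter_of_finite fun a =>
    ((isLocallyConstant_walk step (start a) t).comp_continuous
      (continuous_apply (ident a))).isOpen_fiber z

variable {z : V} (hz : ∀ v, ∃ w, ∀ᶠ t in atTop, walk step w v t = z)
include hz

lemma exists_gathers_splice [Finite α] {ident : α → ι} (hident : ident.Injective) (start : α → V)
    (s : ι → ℕ → A) (T : ℕ) :
    ∃ w : ι → ℕ → A, Gathers step ident start fun i => splice (s i) T (w i) := by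
  choose w hw using fun a => hz (walk step (s (ident a)) (start a) T)
  obtain ⟨t, ht⟩ := (eventually_all.2 hw).exists
  refine ⟨Function.extend ident w s, T + t, z, fun a => ?_⟩
  rw [walk_splice_add, hident.extend_apply, ht a]

lemma dense_setOf_gathers [Finite α] [TopologicalSpace A] {ident : α → ι}
    (hident : ident.Injective) (start : α → V) : Dense {s | Gathers step ident start s} := by
  intro s
  choose w hw using exists_gathers_splice step hz hident start s
  exact mem_closure_of_tendsto
    (tendsto_pi_nhds.2 fun i => tendsto_splice (s i) fun T => w T i) (.of_forall hw)

lemma eventually_residual_gathers [Finite α] [TopologicalSpace A] [DiscreteTopology A]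
    {ident : α → ι} (hident : ident.Injective) (start : α → V) :
    ∀ᶠ s in residual (ι → ℕ → A), Gathers step ident start s :=
  residual_of_dense_open (isOpen_setOf_gathers step ident start)
    (dense_setOf_gathers step hz hident start)

end Gathering

namespace PortGraph

/-- The node reached from `v` by an agent that tries to leave through port `p`. As in `mStep`, the
agent stays at `v` if there is no such port, in particular if `p = 0`. -/
def step (G : PortGraph) (v : Fin G.n) (p : ℕ) : Fin G.n :=
  if 1 ≤ p ∧ p - 1 < G.deg v then (G.mtch v (p - 1)).1 else v

lemma step_eq_self_of_lt (G : PortGraph) {v : Fin G.n} {p : ℕ} (hp : G.deg v < p) :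
    G.step v p = v :=
  if_neg (by lia)

lemma exists_walk_eventually_eq (G : PortGraph) (z v : Fin G.n) :
    ∃ w, ∀ᶠ t in atTop, walk G.step w v t = z := by
  induction G.connected v z using Relation.ReflTransGen.head_induction_on with
  | refl => exact ⟨_, .of_forall (walk_const_of_fixed G.step (p := 0) (by simp [step]))⟩
  | @head v u hvu _ ih =>
    obtain ⟨i, hi, hu⟩ := hvu
    obtain ⟨w, hw⟩ := ih
    have step_eq : G.step v (i + 1) = u := by simp [step, hi, hu]
    have walk_eq (t : ℕ) :
        walk G.step (splice (fun _ => i + 1) 1 w) v (1 + t) = walk G.step w u t := by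
      rw [walk_splice_add, walk, walk, step_eq]
    refine ⟨splice (fun _ => i + 1) 1 w, ?_⟩
    filter_upwards [(tendsto_sub_atTop_nat 1).eventually hw, eventually_ge_atTop 1] with t ht one_le
    rw [← Nat.add_sub_of_le one_le, walk_eq, ht]

/-- `PortGraph` itself is uncountable, since `mtch` is arbitrary at nonexistent ports. -/
lemma countable_range_step :
    (Set.range fun G : PortGraph =>
      (⟨G.n, G.step⟩ : Σ n, Fin n → ℕ → Fin n)).Countable := by
  let ofTable : (Σ n d : ℕ, Fin n → Fin d → Fin n) → Σ n, Fin n → ℕ → Fin n :=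
    fun T => ⟨T.1, fun v p => if h : p < T.2.1 then T.2.2 v ⟨p, h⟩ else v⟩
  refine (Set.countable_range ofTable).mono (Set.range_subset_iff.2 fun G => ?_)
  obtain ⟨d, hd⟩ := (Set.finite_range G.deg).bddAbove
  refine ⟨⟨G.n, d + 1, fun v p => G.step v p⟩, Sigma.ext rfl (heq_of_eq ?_)⟩
  funext v p
  by_cases hp : p < d + 1
  · exact dif_pos hp
  · have deg_le : G.deg v ≤ d := hd (Set.mem_range_self v)
    exact (dif_neg hp).trans (G.step_eq_self_of_lt (by lia)).symm

lemma eventually_residual_forall_gathers :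
    ∀ᶠ s in residual (ℕ → ℕ → ℕ), ∀ (G : PortGraph) (k : ℕ) (ident : Fin k → ℕ),
      ident.Injective → ∀ start : Fin k → Fin G.n, Gathers G.step ident start s := by
  suffices ∀ᶠ s in residual (ℕ → ℕ → ℕ),
      ∀ c ∈ Set.range fun G : PortGraph => (⟨G.n, G.step⟩ : Σ n, Fin n → ℕ → Fin n),
        ∀ (k : ℕ) (ident : Fin k → ℕ), ident.Injective →
          ∀ start : Fin k → Fin c.1, Gathers c.2 ident start s from
    this.mono fun s hs G => hs _ (Set.mem_range_self G)
  refine (eventually_countable_ball countable_range_step).2 ?_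
  rintro _ ⟨G, rfl⟩
  simp only [eventually_countable_forall]
  exact fun k ident hident start =>
    eventually_residual_gathers G.step (G.exists_walk_eventually_eq ⟨0, G.npos⟩) hident start

end PortGraph

/-- The protocol in which agent `i` tries port `s i t` in round `t`, ignoring the team size and all
observations. An agent's history in round `t` has length `t + 1`. -/
def obliviousProtocol (s : ℕ → ℕ → ℕ) : MProtocol :=
  fun i _ history => .move (s i (history.length - 1))

section Run

variable (G : PortGraph) {k : ℕ} (ident : Fin k → ℕ) (start : Fin k → Fin G.n)

lemma length_hist_mRun (σ : MProtocol) (t : ℕ) (a : Fin k) :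
    ((mRun G k ident σ start t).hist a).length = t + 1 := by
  induction t with
  | zero => rfl
  | succ t ih => simp [mRun, mStep, ih]

lemma pos_mRun_obliviousProtocol (s : ℕ → ℕ → ℕ) (t : ℕ) (a : Fin k) :
    (mRun G k ident (obliviousProtocol s) start t).pos a =
      walk G.step (s (ident a)) (start a) t := by
  induction t with
  | zero => rfl
  | succ t ih =>
    rw [walk, ← ih]
    simp only [mRun, mStep, obliviousProtocol, length_hist_mRun, Nat.add_sub_cancel,
      PortGraph.step]
    split_ifs <;> rfl

end Run

theorem exists_gathering_protocol_general :
    ∃ s : ℕ → ℕ → ℕ, ∀ (k : ℕ) (G : PortGraph) (ident : Fin k → ℕ), Function.Injective ident →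
      ∀ start : Fin k → Fin G.n, ∃ (r : ℕ) (z : Fin G.n), ∀ a : Fin k,
        (mRun G k ident (obliviousProtocol s) start r).pos a = z := by
  obtain ⟨s, hs⟩ := (dense_of_mem_residual PortGraph.eventually_residual_forall_gathers).nonempty
  refine ⟨s, fun k G ident hident start => ?_⟩
  simpa only [pos_mRun_obliviousProtocol, Gathers] using hs G k ident hident start

/-- There is a protocol (parameterized by the agent identity and the
team size `k`) gathering, for every `k > 1`, every graph of unknown size and every initial
placement of `k` agents with distinct positive identities, all `k` agents at one node. -/
theorem exists_gathering_protocol :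
    ∃ σ : MProtocol, ∀ k : ℕ, 1 < k →
      ∀ (G : PortGraph) (ident : Fin k → ℕ),
        (∀ a, 0 < ident a) → Function.Injective ident →
        ∀ start : Fin k → Fin G.n,
          ∃ r : ℕ, ∀ a b : Fin k,
            (mRun G k ident σ start r).pos a = (mRun G k ident σ start r).pos b := by
  obtain ⟨s, hs⟩ := exists_gathering_protocol_general
  exact ⟨obliviousProtocol s, fun k _ G ident _ hident start =>
    (hs k G ident hident start).imp fun _ ⟨_, hz⟩ a b => (hz a).trans (hz b).symm⟩
end

section
/- There exists a protocol for a single agent equipped with a movable token such that, for every port-labeled graph G and every start node v (with the token initially located at v), the execution of the protocol halts after finitely many rounds and outputs a port-labeled graph, with a distinguished node, that is isomorphic to G by a port-preserving isomorphism mapping the distinguished node to v. -/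
/-- Observation of an agent with a token: degree, entry port, token present? -/
abbrev TObs : Type := ℕ × ℕ × Bool

/-- Actions of an agent with a movable token: halt producing as output a
port-labeled graph with a distinguished node, stay, or move through port `p`,
carrying the token or not. -/
inductive TAction : Type
  | halt (output : Σ G : PortGraph, Fin G.n)
  | stay
  | move (p : ℕ) (carry : Bool)

abbrev TProtocol : Type := List TObs → TAction

structure TState (G : PortGraph) where
  pos : Fin G.n
  entry : ℕ
  token : Fin G.n
  hist : List TObs

def PortGraph.stepT (G : PortGraph) (σ : TProtocol) (c : TState G) : TState G :=
  let next : Fin G.n × ℕ × Fin G.n :=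
    match σ c.hist with
    | .halt _ => (c.pos, c.entry, c.token)
    | .stay => (c.pos, c.entry, c.token)
    | .move p carry =>
        if 1 ≤ p ∧ p - 1 < G.deg c.pos then
          ((G.mtch c.pos (p - 1)).1, (G.mtch c.pos (p - 1)).2 + 1,
            if carry ∧ c.token = c.pos then (G.mtch c.pos (p - 1)).1 else c.token)
        else (c.pos, c.entry, c.token)
  ⟨next.1, next.2.1, next.2.2,
    c.hist ++ [(G.deg next.1, next.2.1, decide (next.2.2 = next.1))]⟩

/-- The execution of token protocol `σ` in `G` from `v`, the token initially at `v`. -/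
def PortGraph.runT (G : PortGraph) (σ : TProtocol) (v : Fin G.n) : ℕ → TState G
  | 0 => ⟨v, 0, v, [(G.deg v, 0, true)]⟩
  | t + 1 => G.stepT σ (G.runT σ v t)

def PortGraph.actT (G : PortGraph) (σ : TProtocol) (v : Fin G.n) (t : ℕ) : TAction :=
  σ (G.runT σ v t).hist

/-!
The exploring agent follows a fixed infinite sequence of moves in which every finite word of moves
occurs, whatever it observes. It halts once all rooted graphs that could have produced its history
are isomorphic, and outputs one of them; the point is that this always happens.

With agent and token together at a node `v`, the agent can check whether two walks `p` and `q` from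
`v` end at the same node: it carries the token along `p`, returns without it, and looks for it after
`q`. Seeing the token again certifies that a walk believed to be closed is closed, so that this
works equally well in every graph producing the same observations. Finitely many such checks pin
down the graph. To cope with an arbitrary current configuration, the words obtained for the finitely
many configurations are chained into a single one, which occurs in the sequence of moves; finally,
since the agent sees its entry ports, an isomorphism matching the current configurations also
matches the start nodes.
-/

theorem exists_seq_forall_word_occurs (α : Type*) [Countable α] [Nonempty α] :
    ∃ a : ℕ → α, ∀ w : List α, ∃ t,
      (List.range (t + w.length)).map a = (List.range t).map a ++ w := by
  obtain ⟨word, hword⟩ := exists_surjective_nat (List α)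
  inhabit α
  -- `Nat.pair i k = k * k + i` for `i < k`, so the `k` values `i < k` fill consecutive positions.
  refine ⟨fun t => (word t.unpair.2.unpair.1).getD t.unpair.1 default, fun w => ?_⟩
  obtain ⟨c, rfl⟩ := hword w
  obtain ⟨k, hk⟩ : ∃ k, k = Nat.pair c (word c).length := ⟨_, rfl⟩
  refine ⟨k * k, ?_⟩
  rw [List.range_add, List.map_append, List.map_map]
  congr 1
  refine List.ext_getElem (by simp) fun i _ hi => ?_
  have hpair : k * k + i = Nat.pair i k :=
    (if_pos (hi.trans_le (hk ▸ Nat.right_le_pair c _))).symm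
  rw [List.getElem_map, List.getElem_range, Function.comp_apply, hpair, Nat.unpair_pair, hk,
    Nat.unpair_pair, List.getD_eq_getElem _ _ hi]

namespace PortGraph

variable {G H : PortGraph}

/-! ### Port-preserving maps -/

/-- A map preserving degrees and the far end of each port: a covering map of port-labeled graphs,
since matching of the entry ports is then automatic (`IsPortHom.mtch_eq`). -/
structure IsPortHom (f : Fin G.n → Fin H.n) : Prop where
  deg_eq : ∀ u, H.deg (f u) = G.deg u
  mtch_fst : ∀ u, ∀ i < G.deg u, (H.mtch (f u) i).1 = f (G.mtch u i).1

namespace IsPortHom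

variable {f : Fin G.n → Fin H.n}

theorem mtch_eq (hf : IsPortHom f) {u : Fin G.n} {i : ℕ} (hi : i < G.deg u) :
    H.mtch (f u) i = (f (G.mtch u i).1, (G.mtch u i).2) := by
  refine Prod.ext (hf.mtch_fst u i hi) ?_
  have hi' : i < H.deg (f u) := by rwa [hf.deg_eq]
  have hport := H.mtch_lt _ _ hi'
  have hinvol := H.mtch_invol _ _ hi'
  rw [hf.mtch_fst u i hi] at hport hinvol
  -- Both ports lead from `f (G.mtch u i).1` back to `f u`.
  refine H.no_multi _ _ _ hport ((G.mtch_lt u i hi).trans_eq (hf.deg_eq _).symm) ?_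
  rw [hinvol, hf.mtch_fst _ _ (G.mtch_lt u i hi), G.mtch_invol u i hi]

theorem surjective (hf : IsPortHom f) : Function.Surjective f := fun b => by
  induction H.connected (f ⟨0, G.npos⟩) b with
  | refl => exact ⟨_, rfl⟩
  | tail _ hadj ih =>
    obtain ⟨a, rfl⟩ := ih
    obtain ⟨i, hi, rfl⟩ := hadj
    exact ⟨_, (hf.mtch_fst a i (hi.trans_eq (hf.deg_eq a))).symm⟩

theorem isPortIso_ofBijective (hf : IsPortHom f) (hinj : Function.Injective f) :
    IsPortIso G H (Equiv.ofBijective f ⟨hinj, hf.surjective⟩) :=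
  ⟨hf.deg_eq, fun _ _ => hf.mtch_eq⟩

end IsPortHom

/-! ### Walks -/

/-- The node reached from `u` through port `i + 1`; a move through a missing port has no effect. -/
def follow (G : PortGraph) (u : Fin G.n) (i : ℕ) : Fin G.n :=
  if i < G.deg u then (G.mtch u i).1 else u

/-- The end of the walk from `u` along a list of (zero-based) ports. -/
def walk (G : PortGraph) (u : Fin G.n) (p : List ℕ) : Fin G.n :=
  p.foldl G.follow u

theorem walk_append (u : Fin G.n) (p q : List ℕ) :
    G.walk u (p ++ q) = G.walk (G.walk u p) q :=
  List.foldl_append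

theorem walk_singleton {u : Fin G.n} {i : ℕ} (hi : i < G.deg u) :
    G.walk u [i] = (G.mtch u i).1 :=
  if_pos hi

theorem exists_walk_eq (u v : Fin G.n) : ∃ p, G.walk u p = v := by
  induction G.connected u v with
  | refl => exact ⟨[], rfl⟩
  | tail _ hadj ih =>
    obtain ⟨p, rfl⟩ := ih
    obtain ⟨i, hi, rfl⟩ := hadj
    exact ⟨p ++ [i], (walk_append ..).trans (walk_singleton hi)⟩

theorem IsPortHom.of_walks {v : Fin G.n} {v' : Fin H.n} {P : Fin G.n → List ℕ}
    (hP : ∀ u, G.walk v (P u) = u)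
    (hdeg : ∀ u, H.deg (H.walk v' (P u)) = G.deg u)
    (hedge : ∀ u, ∀ i < G.deg u, H.walk v' (P (G.walk v (P u ++ [i]))) = H.walk v' (P u ++ [i])) :
    IsPortHom fun u => H.walk v' (P u) where
  deg_eq := hdeg
  mtch_fst u i hi := by
    have h := hedge u i hi
    simp only [walk_append, hP] at h
    rw [walk_singleton hi, walk_singleton (hi.trans_eq (hdeg u).symm)] at h
    exact h.symm

/-! ### Configurations -/

/-- A move `(i, c)` goes through port `i + 1`, taking the token along if it is present and `c`. -/
abbrev Move : Type := ℕ × Bool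

/-- The positions of the agent and of the token. -/
@[ext]
structure Config (G : PortGraph) where
  pos : Fin G.n
  token : Fin G.n

namespace Config

instance : Finite G.Config :=
  .of_injective (fun s => (s.pos, s.token)) fun _ _ h =>
    Config.ext (congrArg Prod.fst h) (congrArg Prod.snd h)

/-- The configuration after a move. -/
def step (s : G.Config) (a : Move) : G.Config :=
  ⟨G.follow s.pos a.1, if a.2 ∧ s.token = s.pos then G.follow s.pos a.1 else s.token⟩

/-- The configuration after a word of moves. -/
def exec (s : G.Config) (w : List Move) : G.Config :=
  w.foldl step s

/-- What the agent sees of a configuration: the degree and the presence of the token. -/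
def obs (s : G.Config) : ℕ × Bool :=
  (G.deg s.pos, decide (s.token = s.pos))

/-- The entry port seen after a move, or `0` if the move goes through a missing port. -/
def entryPort (s : G.Config) (a : Move) : ℕ :=
  if a.1 < G.deg s.pos then (G.mtch s.pos a.1).2 + 1 else 0

/-- Two configurations, possibly of different graphs, yield the same observations all along the
word `w`. -/
def Indist (s : G.Config) (s' : H.Config) : List Move → Prop
  | [] => s.obs = s'.obs
  | a :: w =>
    s.obs = s'.obs ∧ s.entryPort a = s'.entryPort a ∧ Indist (s.step a) (s'.step a) w

theorem exec_append (s : G.Config) (w w' : List Move) :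
    s.exec (w ++ w') = (s.exec w).exec w' :=
  List.foldl_append

section Indist

variable {s : G.Config} {s' : H.Config} {w w' : List Move}

theorem Indist.obs_eq (h : Indist s s' w) : s.obs = s'.obs := by
  cases w with
  | nil => exact h
  | cons => exact h.1

theorem indist_append :
    Indist s s' (w ++ w') ↔ Indist s s' w ∧ Indist (s.exec w) (s'.exec w) w' := by
  induction w generalizing s s' with
  | nil => exact ⟨fun h => ⟨h.obs_eq, h⟩, And.right⟩
  | cons a w ih => simp only [List.cons_append, Indist, ih, exec, List.foldl_cons, and_assoc]

theorem Indist.obs_exec_eq (h : Indist s s' w) : (s.exec w).obs = (s'.exec w).obs := by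
  rw [← List.append_nil w, indist_append] at h
  exact h.2

theorem token_eq_pos_iff_of_obs_eq (h : s.obs = s'.obs) :
    s.token = s.pos ↔ s'.token = s'.pos :=
  decide_eq_decide.1 (congrArg Prod.snd h)

end Indist

/-! ### Comparing the ends of two walks -/

/-- The word of moves along the ports `p` that takes the token along. -/
def carry (p : List ℕ) : List Move := p.map (·, true)

/-- The word of moves along the ports `p` that leaves the token in place. -/
def leave (p : List ℕ) : List Move := p.map (·, false)

theorem exec_carry (u : Fin G.n) (p : List ℕ) :
    exec ⟨u, u⟩ (carry p) = ⟨G.walk u p, G.walk u p⟩ := by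
  induction p generalizing u with
  | nil => rfl
  | cons i p ih => simpa [exec, carry, walk, step] using ih (G.follow u i)

theorem exec_leave (u x : Fin G.n) (p : List ℕ) :
    exec ⟨u, x⟩ (leave p) = ⟨G.walk u p, x⟩ := by
  induction p generalizing u with
  | nil => rfl
  | cons i p ih => simpa [exec, leave, walk, step] using ih (G.follow u i)

/-- What one experiment with the token certifies: as to the degree at the end of `q`, and whether
`p` and `q` end at the same node, the walks behave from `v'` in `H` as they do from `v` in `G`. -/
def Compares (v : Fin G.n) (v' : Fin H.n) (p q : List ℕ) : Prop :=
  H.deg (H.walk v' q) = G.deg (G.walk v q) ∧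
    (H.walk v' p = H.walk v' q ↔ G.walk v p = G.walk v q)

theorem walk_eq_iff_of_indist_leave {u x : Fin G.n} {u' x' : Fin H.n} {p : List ℕ}
    (h : Indist ⟨u, x⟩ ⟨u', x'⟩ (leave p)) :
    x = G.walk u p ↔ x' = H.walk u' p := by
  have hobs := h.obs_exec_eq
  rw [exec_leave, exec_leave] at hobs
  exact token_eq_pos_iff_of_obs_eq hobs

theorem exists_comparing_word (v : Fin G.n) (p q : List ℕ) :
    ∃ w, exec ⟨v, v⟩ w = ⟨v, v⟩ ∧ ∀ (H : PortGraph) (v' : Fin H.n),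
      Indist ⟨v, v⟩ ⟨v', v'⟩ w → exec ⟨v', v'⟩ w = ⟨v', v'⟩ ∧ Compares v v' p q := by
  obtain ⟨p', hp'⟩ := exists_walk_eq (G.walk v p) v
  obtain ⟨q', hq'⟩ := exists_walk_eq (G.walk v q) v
  have hclosed : v = G.walk v (p ++ p') := by rw [walk_append, hp']
  refine ⟨leave (p ++ p') ++ (carry p ++ (leave (p' ++ q) ++ (leave (q' ++ p) ++ carry p'))),
    ?_, fun H v' h => ?_⟩
  · simp only [exec_append, exec_leave, exec_carry, walk_append, hp', hq']
  rw [indist_append] at h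
  obtain ⟨h_closed, h⟩ := h
  have hclosed' : v' = H.walk v' (p ++ p') := (walk_eq_iff_of_indist_leave h_closed).1 hclosed
  rw [exec_leave, exec_leave, ← hclosed, ← hclosed'] at h
  rw [exec_append, exec_leave, ← hclosed']
  rw [walk_append] at hclosed hclosed'
  simp only [indist_append, exec_append, exec_leave, exec_carry, walk_append, ← hclosed,
    ← hclosed'] at h ⊢
  obtain ⟨-, h_look, h_back, -⟩ := h
  have h_token : H.walk v' p = H.walk (H.walk (H.walk v' q) q') p := by
    have := walk_eq_iff_of_indist_leave h_back
    rwa [walk_append, walk_append, hq', eq_self_iff_true, true_iff] at this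
  refine ⟨by rw [← h_token, exec_carry, ← hclosed'], ?_, ?_⟩
  · have hobs := h_look.obs_exec_eq
    rw [exec_leave, exec_leave, walk_append, walk_append, ← hclosed, ← hclosed'] at hobs
    exact (congrArg Prod.fst hobs).symm
  · have := walk_eq_iff_of_indist_leave h_look
    rw [walk_append, walk_append, ← hclosed, ← hclosed'] at this
    exact this.symm

theorem exists_comparing_word_of_finite (v : Fin G.n) {S : Set (List ℕ × List ℕ)}
    (hS : S.Finite) :
    ∃ w, ∀ (H : PortGraph) (v' : Fin H.n),
      Indist ⟨v, v⟩ ⟨v', v'⟩ w → ∀ x ∈ S, Compares v v' x.1 x.2 := by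
  induction S, hS using Set.Finite.induction_on with
  | empty => exact ⟨[], fun _ _ _ _ hx => hx.elim⟩
  | @insert x S _ _ ih =>
    obtain ⟨w, hw⟩ := ih
    obtain ⟨w₀, hreturn, hw₀⟩ := exists_comparing_word v x.1 x.2
    refine ⟨w₀ ++ w, fun H v' h => ?_⟩
    rw [indist_append, hreturn] at h
    obtain ⟨hreturn', hx⟩ := hw₀ H v' h.1
    exact Set.forall_mem_insert.2 ⟨hx, hw H v' (hreturn' ▸ h.2)⟩

/-! ### Words that identify a graph -/

/-- The image of a configuration under a map of nodes. -/
def map (f : Fin G.n → Fin H.n) (s : G.Config) : H.Config :=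
  ⟨f s.pos, f s.token⟩

/-- The observations along `w` from `s` determine the graph and the configuration `s` in it. -/
def Identifies (s : G.Config) (w : List Move) : Prop :=
  ∀ (H : PortGraph) (s' : H.Config), Indist s s' w → ∃ e, IsPortIso G H e ∧ s.map e = s'

theorem exists_identifies_colocated (v : Fin G.n) : ∃ w, Identifies ⟨v, v⟩ w := by
  choose P hP using exists_walk_eq v
  let S : Set (List ℕ) :=
    insert [] (Set.range P ∪ Set.range fun x : Σ u, Fin (G.deg u) => P x.1 ++ [x.2.1])
  have hS : S.Finite := ((Set.finite_range _).union (Set.finite_range _)).insert _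
  have hP_mem (u) : P u ∈ S := .inr (.inl ⟨u, rfl⟩)
  obtain ⟨w, hw⟩ := exists_comparing_word_of_finite v (hS.prod hS)
  refine ⟨w, fun H ⟨v', x'⟩ h => ?_⟩
  obtain rfl : x' = v' := (token_eq_pos_iff_of_obs_eq h.obs_eq).1 rfl
  have hcmp {p q} (hp : p ∈ S) (hq : q ∈ S) : Compares v x' p q := hw H x' h (p, q) ⟨hp, hq⟩
  have hhom : IsPortHom fun u => H.walk x' (P u) := by
    refine .of_walks hP (fun u => ?_) fun u i hi => ?_
    · rw [(hcmp (hP_mem u) (hP_mem u)).1, hP]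
    · exact (hcmp (hP_mem _) (.inr (.inr ⟨⟨u, i, hi⟩, rfl⟩))).2.2 (hP _)
  have hinj : Function.Injective fun u => H.walk x' (P u) := fun a b hab => by
    simpa only [hP] using (hcmp (hP_mem a) (hP_mem b)).2.1 hab
  have hroot : H.walk x' (P v) = x' := (hcmp (hP_mem v) (.inl rfl)).2.2 (hP v)
  exact ⟨_, hhom.isPortIso_ofBijective hinj, Config.ext hroot hroot⟩

theorem map_eq_of_map_step_eq {s : G.Config} {s' : H.Config} {a : Move}
    {e : Fin G.n ≃ Fin H.n} (he : IsPortIso G H e) (hobs : s.obs = s'.obs)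
    (hentry : s.entryPort a = s'.entryPort a) (hstep : (s.step a).map e = s'.step a) :
    s.map e = s' := by
  have htoken := token_eq_pos_iff_of_obs_eq hobs
  have hdeg : G.deg s.pos = H.deg s'.pos := congrArg Prod.fst hobs
  obtain ⟨hpos_step, htoken_step⟩ := Config.ext_iff.1 hstep
  have hpos : e s.pos = s'.pos := by
    by_cases hi : a.1 < G.deg s.pos
    · have hi' := hi.trans_eq hdeg
      simp only [map, step, follow, if_pos hi, if_pos hi'] at hpos_step
      simp only [entryPort, if_pos hi, if_pos hi', Nat.add_right_cancel_iff] at hentry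
      have hback := he.2 _ _ (G.mtch_lt _ _ hi)
      rw [hpos_step, hentry, H.mtch_invol _ _ hi', ← hentry, G.mtch_invol _ _ hi] at hback
      exact (congrArg Prod.fst hback).symm
    · simpa [map, step, follow, hi, hdeg ▸ hi] using hpos_step
  refine Config.ext hpos ?_
  by_cases hc : s.token = s.pos
  · exact (congrArg e hc).trans (hpos.trans (htoken.1 hc).symm)
  · simpa [map, step, hc, htoken.not.1 hc] using htoken_step

theorem map_eq_of_map_exec_eq {s : G.Config} {s' : H.Config} {w : List Move}
    {e : Fin G.n ≃ Fin H.n} (he : IsPortIso G H e) (h : Indist s s' w)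
    (hexec : (s.exec w).map e = s'.exec w) : s.map e = s' := by
  induction w generalizing s s' with
  | nil => exact hexec
  | cons a w ih =>
    obtain ⟨hobs, hentry, h⟩ := h
    exact map_eq_of_map_step_eq he hobs hentry (ih h hexec)

theorem Identifies.append {s : G.Config} {w : List Move} (h : Identifies s w) (w' : List Move) :
    Identifies s (w ++ w') :=
  fun H s' hind => h H s' (indist_append.1 hind).1

theorem Identifies.of_exec {s : G.Config} {w w' : List Move} (h : Identifies (s.exec w) w') :
    Identifies s (w ++ w') := fun H s' hind => by
  obtain ⟨hw, hw'⟩ := indist_append.1 hind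
  obtain ⟨e, he, hexec⟩ := h H _ hw'
  exact ⟨e, he, map_eq_of_map_exec_eq he hw hexec⟩

theorem exists_identifies (s : G.Config) : ∃ w, Identifies s w := by
  obtain ⟨p, hp⟩ := exists_walk_eq s.pos s.token
  obtain ⟨w, hw⟩ := exists_identifies_colocated s.token
  refine ⟨leave p ++ w, .of_exec ?_⟩
  rwa [exec_leave, hp]

theorem exists_forall_identifies (G : PortGraph) : ∃ w, ∀ s : G.Config, Identifies s w := by
  suffices ∀ S : Set G.Config, S.Finite → ∃ w, ∀ s ∈ S, Identifies s w by
    simpa using this Set.univ Set.finite_univ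
  intro S hS
  induction S, hS using Set.Finite.induction_on with
  | empty => exact ⟨[], fun _ hs => hs.elim⟩
  | @insert s S _ _ ih =>
    obtain ⟨w, hw⟩ := ih
    obtain ⟨w', hw'⟩ := exists_identifies (s.exec w)
    exact ⟨w ++ w', Set.forall_mem_insert.2 ⟨hw'.of_exec, fun t ht => (hw t ht).append w'⟩⟩

end Config

/-! ### Executing a fixed sequence of moves -/

theorem hist_runT_succ (σ : TProtocol) (v : Fin G.n) (t : ℕ) :
    (G.runT σ v (t + 1)).hist = (G.runT σ v t).hist ++
      [(G.deg (G.runT σ v (t + 1)).pos, (G.runT σ v (t + 1)).entry,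
        decide ((G.runT σ v (t + 1)).token = (G.runT σ v (t + 1)).pos))] :=
  rfl

theorem length_hist_runT (σ : TProtocol) (v : Fin G.n) (t : ℕ) :
    (G.runT σ v t).hist.length = t + 1 := by
  induction t with
  | zero => rfl
  | succ t ih => rw [hist_runT_succ, List.length_append, ih, List.length_singleton]

theorem runT_congr {σ τ : TProtocol} {v : Fin G.n} {t : ℕ}
    (h : ∀ s < t, σ (G.runT τ v s).hist = τ (G.runT τ v s).hist) :
    G.runT σ v t = G.runT τ v t := by
  induction t with
  | zero => rfl
  | succ t ih =>
    rw [runT, runT, ih fun s hs => h s (hs.trans t.lt_succ_self), stepT, stepT, h t t.lt_succ_self]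

end PortGraph

/-- The configuration underlying a state of an execution. -/
def TState.config {G : PortGraph} (c : TState G) : G.Config := ⟨c.pos, c.token⟩

/-- The protocol that performs the moves `a 0, a 1, …` whatever it observes, and never halts. -/
def TProtocol.oblivious (a : ℕ → PortGraph.Move) : TProtocol := fun h =>
  .move ((a (h.length - 1)).1 + 1) (a (h.length - 1)).2

namespace PortGraph

variable {G H : PortGraph}

theorem stepT_of_move {σ : TProtocol} {c : TState G} {a : Move}
    (h : σ c.hist = .move (a.1 + 1) a.2) :
    (G.stepT σ c).config = c.config.step a ∧
      (G.stepT σ c).entry = if a.1 < G.deg c.pos then c.config.entryPort a else c.entry := by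
  by_cases hi : a.1 < G.deg c.pos <;>
    simp [stepT, TState.config, Config.step, Config.entryPort, follow, h, hi]

section Oblivious

variable (a : ℕ → Move)

theorem runT_oblivious_succ (v : Fin G.n) (t : ℕ) :
    (G.runT (.oblivious a) v (t + 1)).config = (G.runT (.oblivious a) v t).config.step (a t) ∧
      (G.runT (.oblivious a) v (t + 1)).entry =
        if (a t).1 < G.deg (G.runT (.oblivious a) v t).pos then
          (G.runT (.oblivious a) v t).config.entryPort (a t)
        else (G.runT (.oblivious a) v t).entry :=
  stepT_of_move (by rw [TProtocol.oblivious, length_hist_runT, Nat.add_sub_cancel])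

theorem config_runT_oblivious (v : Fin G.n) (t : ℕ) :
    (G.runT (.oblivious a) v t).config = Config.exec ⟨v, v⟩ ((List.range t).map a) := by
  induction t with
  | zero => rfl
  | succ t ih =>
    rw [(runT_oblivious_succ a v t).1, ih, List.range_succ, List.map_append, Config.exec_append]
    rfl

variable {a}

theorem indist_of_hist_runT_oblivious_eq {v : Fin G.n} {v' : Fin H.n} {t : ℕ}
    (h : (G.runT (.oblivious a) v t).hist = (H.runT (.oblivious a) v' t).hist) :
    Config.Indist ⟨v, v⟩ ⟨v', v'⟩ ((List.range t).map a) := by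
  induction t with
  | zero =>
    simpa [runT, Config.Indist, Config.obs] using h
  | succ t ih =>
    rw [hist_runT_succ, hist_runT_succ] at h
    obtain ⟨hhist, hlast⟩ := List.append_inj' h rfl
    simp only [List.cons.injEq, Prod.mk.injEq, and_true] at hlast
    obtain ⟨hdeg, hentry, htoken⟩ := hlast
    obtain ⟨hconfig, hentry_eq⟩ := runT_oblivious_succ a v t
    obtain ⟨hconfig', hentry_eq'⟩ := runT_oblivious_succ a v' t
    have hobs := (ih hhist).obs_exec_eq
    rw [List.range_succ, List.map_append, Config.indist_append]
    refine ⟨ih hhist, ?_⟩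
    simp only [← config_runT_oblivious] at hobs ⊢
    refine ⟨hobs, ?_, ?_⟩
    · have hdeg_eq := congrArg Prod.fst hobs
      dsimp only [Config.obs, TState.config] at hdeg_eq
      rw [hentry_eq, hentry_eq', ← hdeg_eq] at hentry
      by_cases hi : (a t).1 < G.deg (G.runT (.oblivious a) v t).pos
      · simpa only [if_pos hi] using hentry
      · simp [Config.entryPort, TState.config, hi, hdeg_eq ▸ hi]
    · rw [← hconfig, ← hconfig']
      exact Prod.ext hdeg htoken

end Oblivious

/-! ### Halting -/

/-- Port-preserving isomorphism of port-labeled graphs with a distinguished node. -/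
def RootedIso (x y : Σ G : PortGraph, Fin G.n) : Prop :=
  ∃ e : Fin x.1.n ≃ Fin y.1.n, IsPortIso x.1 y.1 e ∧ e x.2 = y.2

end PortGraph

namespace TProtocol

open PortGraph

/-- Up to isomorphism, `x` is the only rooted graph in which `σ` can produce the history `h`. -/
def Determines (σ : TProtocol) (h : List TObs) (x : Σ G : PortGraph, Fin G.n) : Prop :=
  ∀ (G : PortGraph) (v : Fin G.n) (t : ℕ), (G.runT σ v t).hist = h → RootedIso x ⟨G, v⟩

theorem exists_determines_oblivious :
    ∃ a : ℕ → Move, ∀ (G : PortGraph) (v : Fin G.n),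
      ∃ t x, Determines (oblivious a) (G.runT (oblivious a) v t).hist x := by
  obtain ⟨a, ha⟩ := exists_seq_forall_word_occurs Move
  refine ⟨a, fun G v => ?_⟩
  obtain ⟨w, hw⟩ := Config.exists_forall_identifies G
  obtain ⟨t, ht⟩ := ha w
  refine ⟨t + w.length, ⟨G, v⟩, fun H v' t' h => ?_⟩
  obtain rfl : t' = t + w.length := by simpa [length_hist_runT] using congrArg List.length h
  have hind := indist_of_hist_runT_oblivious_eq h.symm
  rw [ht] at hind
  obtain ⟨e, he, hroot⟩ := (hw _).of_exec H ⟨v', v'⟩ hind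
  exact ⟨e, he, congrArg Config.pos hroot⟩

open Classical in
/-- The protocol that follows `σ` until the history determines the rooted graph, and then outputs
it. Protocols being arbitrary functions of the history, this test need not be computable. -/
noncomputable def haltWhenDetermined (σ : TProtocol) : TProtocol := fun h =>
  if hx : ∃ x, σ.Determines h x then .halt hx.choose else σ h

theorem exists_halt_haltWhenDetermined {σ : TProtocol} (hσ : ∀ h o, σ h ≠ .halt o)
    {G : PortGraph} {v : Fin G.n} (hdet : ∃ t x, σ.Determines (G.runT σ v t).hist x) :
    ∃ t out, G.actT σ.haltWhenDetermined v t = .halt out ∧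
      (∀ s < t, ∀ o, G.actT σ.haltWhenDetermined v s ≠ .halt o) ∧ RootedIso out ⟨G, v⟩ := by
  classical
  have hmin (s) (hs : s < Nat.find hdet) :
      σ.haltWhenDetermined (G.runT σ v s).hist = σ (G.runT σ v s).hist :=
    dif_neg (Nat.find_min hdet hs)
  have hrun (s) (hs : s ≤ Nat.find hdet) :
      G.runT σ.haltWhenDetermined v s = G.runT σ v s :=
    runT_congr fun r hr => hmin r (hr.trans_le hs)
  have hx := Nat.find_spec hdet
  refine ⟨Nat.find hdet, hx.choose, ?_, fun s hs o => ?_, hx.choose_spec G v _ rfl⟩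
  · rw [actT, hrun _ le_rfl]
    exact dif_pos hx
  · rw [actT, hrun s hs.le, hmin s hs]
    exact hσ _ o

end TProtocol

/-- There is a protocol for a single agent with a movable token which,
in every port-labeled graph from every start node, halts after finitely many rounds and
outputs a port-labeled graph with a distinguished node which is port-preserving isomorphic
to the underlying graph, the distinguished node being mapped to the start node. -/
theorem exists_map_drawing_token_protocol :
    ∃ σ : TProtocol,
      ∀ (G : PortGraph) (v : Fin G.n),
        ∃ (t : ℕ) (out : Σ G' : PortGraph, Fin G'.n),
          G.actT σ v t = TAction.halt out ∧
          (∀ s : ℕ, s < t → ∀ o, G.actT σ v s ≠ TAction.halt o) ∧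
          ∃ e : Fin out.1.n ≃ Fin G.n, IsPortIso out.1 G e ∧ e out.2 = v := by
  obtain ⟨a, ha⟩ := TProtocol.exists_determines_oblivious
  exact ⟨(TProtocol.oblivious a).haltWhenDetermined, fun G v =>
    TProtocol.exists_halt_haltWhenDetermined (fun _ _ => TAction.noConfusion) (ha G v)⟩
end
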